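/- arXiv:1912.01541 — 5 statements merged into one kernel-verified Lean document; each statement's English description precedes it below -/
import Mathlib

section
/- Convex polygon approximation lemma: there is an absolute constant C (one may take C = 10π + 15) with the following property. Let S be a nonempty finite set of points in the Euclidean plane ℝ² and let ε with 0 < ε ≤ 1 be given. Then there exists a subset Q ⊆ S with |Q| ≤ ⌈10π/√ε⌉ + 15 such that the convex hull of S is contained in the Minkowski sum of the convex hull of Q and the closed ball of radius ε · diam(S) centered at the origin, i.e., conv(S) ⊆ conv(Q) + B(ε · diam(S)). -/
open Metric Pointwise

/-!
The argument is Dudley's. Enclose `S` in a ball of radius `r`, choose a finite net of the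
concentric sphere of radius `2 * r`, and project each net point onto `conv S`; by Carathéodory's
theorem every projection lies in the convex hull of few points of `S`, and `Q` collects these.

It suffices to compare support functions in a unit direction `u`. Let `w` maximise `⟪u, ·⟫` on `S`,
and follow the ray from `w` in direction `u` until it hits the sphere, at `w + t • u` with `t ≥ r`.
If `x` is a net point near `w + t • u` and `p` its projection, then `⟪x - p, w - p⟫ ≤ 0` gives
`4 * t * ⟪u, w - p⟫ ≤ ‖w + t • u - x‖ ^ 2`. The error is therefore quadratic in the mesh of the net,
and in the plane a net of mesh proportional to `√ε` has `O(1 / √ε)` points.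
-/

section Caratheodory

open Module

variable {𝕜 E : Type*} [Field 𝕜] [LinearOrder 𝕜] [IsStrictOrderedRing 𝕜] [AddCommGroup E]
  [Module 𝕜 E]

lemma convexHull_range_eq_image_stdSimplex {ι : Type*} [Fintype ι] (v : ι → E) :
    convexHull 𝕜 (Set.range v) = (fun w : ι → 𝕜 => ∑ i, w i • v i) '' stdSimplex 𝕜 ι := by
  classical
  rw [← convexHull_rangle_single_eq_stdSimplex]
  change _ = Fintype.linearCombination 𝕜 v '' _
  rw [LinearMap.image_convexHull, ← Set.range_comp]
  congr 2
  ext i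
  simp

variable [FiniteDimensional 𝕜 E] {s : Set E}

lemma exists_finset_card_le_finrank_succ_of_mem_convexHull {x : E} (hx : x ∈ convexHull 𝕜 s) :
    ∃ t : Finset E, ↑t ⊆ s ∧ t.card ≤ finrank 𝕜 E + 1 ∧ x ∈ convexHull 𝕜 (t : Set E) := by
  rw [convexHull_eq_union] at hx
  simp only [Set.mem_iUnion] at hx
  obtain ⟨t, hts, ht_indep, hxt⟩ := hx
  have ht_card := ht_indep.card_le_finrank_succ
  rw [Fintype.card_coe] at ht_card
  exact ⟨t, hts, ht_card.trans (Nat.succ_le_succ (Submodule.finrank_le _)), hxt⟩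

lemma exists_finset_card_le_of_subset_convexHull (p : Finset E) (hp : ↑p ⊆ convexHull 𝕜 s) :
    ∃ q : Finset E, ↑q ⊆ s ∧ q.card ≤ p.card * (finrank 𝕜 E + 1) ∧
      ↑p ⊆ convexHull 𝕜 (q : Set E) := by
  classical
  choose! t hts ht_card hxt using fun x (hx : x ∈ p) =>
    exists_finset_card_le_finrank_succ_of_mem_convexHull (hp hx)
  refine ⟨p.biUnion t, by simpa using hts, Finset.card_biUnion_le_card_mul _ _ _ ht_card,
    fun x hx => convexHull_mono ?_ (hxt x hx)⟩
  exact_mod_cast Finset.subset_biUnion_of_mem t hx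

lemma exists_fin_finrank_succ_of_mem_convexHull {x : E} (hx : x ∈ convexHull 𝕜 s) :
    ∃ v : Fin (finrank 𝕜 E + 1) → E, (∀ i, v i ∈ s) ∧ x ∈ convexHull 𝕜 (Set.range v) := by
  obtain ⟨t, hts, ht_card, hxt⟩ := exists_finset_card_le_finrank_succ_of_mem_convexHull hx
  have : Nonempty t := (convexHull_nonempty_iff.1 ⟨x, hxt⟩).to_subtype
  obtain ⟨e⟩ : Nonempty (t ↪ Fin (finrank 𝕜 E + 1)) :=
    Function.Embedding.nonempty_of_card_le (by simpa using ht_card)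
  refine ⟨fun i => (Function.invFun e i : t), fun i => hts (Function.invFun e i).2,
    convexHull_mono (fun y hy => ?_) hxt⟩
  exact ⟨e ⟨y, hy⟩, congrArg Subtype.val (Function.leftInverse_invFun e.injective ⟨y, hy⟩)⟩

end Caratheodory

lemma isCompact_convexHull {E : Type*} [AddCommGroup E] [Module ℝ E]
    [FiniteDimensional ℝ E] [TopologicalSpace E] [ContinuousAdd E] [ContinuousSMul ℝ E]
    {s : Set E} (hs : IsCompact s) : IsCompact (convexHull ℝ s) := by
  set ι := Fin (Module.finrank ℝ E + 1)
  have h_eq : convexHull ℝ s =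
      (fun wv : (ι → ℝ) × (ι → E) => ∑ i, wv.1 i • wv.2 i) ''
        (stdSimplex ℝ ι ×ˢ Set.univ.pi fun _ => s) := by
    ext x
    constructor
    · intro hx
      obtain ⟨v, hvs, hxv⟩ := exists_fin_finrank_succ_of_mem_convexHull hx
      rw [convexHull_range_eq_image_stdSimplex] at hxv
      obtain ⟨w, hw, rfl⟩ := hxv
      exact ⟨(w, v), ⟨hw, fun i _ => hvs i⟩, rfl⟩
    · rintro ⟨⟨w, v⟩, ⟨hw, hv⟩, rfl⟩
      exact mem_convexHull_of_exists_fintype w v hw.1 hw.2 (fun i => hv i trivial) rfl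
  rw [h_eq]
  exact ((isCompact_stdSimplex ℝ ι).prod (isCompact_univ_pi fun _ => hs)).image (by fun_prop)

lemma exists_sub_le_add_smul_mem_sphere {E : Type*} [NormedAddCommGroup E] [NormedSpace ℝ E]
    {c w u : E} {r R : ℝ} (hw : w ∈ closedBall c r) (hrR : r ≤ R) (hu : ‖u‖ = 1) :
    ∃ t : ℝ, R - r ≤ t ∧ w + t • u ∈ sphere c R := by
  have hwc : ‖w - c‖ ≤ r := mem_closedBall_iff_norm.1 hw
  have hr : 0 ≤ r := (norm_nonneg _).trans hwc
  have h_norm : ∀ t : ℝ, 0 ≤ t → ‖t • u‖ = t := fun t ht => by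
    rw [norm_smul, hu, mul_one, Real.norm_of_nonneg ht]
  have h_far : R ≤ ‖w - c + (R + r) • u‖ := by
    have := norm_sub_le_norm_add ((R + r) • u) (w - c)
    rw [h_norm _ (by linarith), add_comm (_ • u)] at this
    linarith
  have h_cont : ContinuousOn (fun t : ℝ => ‖w - c + t • u‖) (Set.Icc 0 (R + r)) := by fun_prop
  obtain ⟨t, ht, ht_eq⟩ := intermediate_value_Icc (by linarith : 0 ≤ R + r) h_cont
    ⟨by simpa using hwc.trans hrR, h_far⟩
  refine ⟨t, ?_, by rwa [mem_sphere_iff_norm, add_sub_right_comm]⟩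
  have := norm_add_le (w - c) (t • u)
  rw [h_norm t ht.1] at this
  linarith [ht_eq]

section InnerProductSpace

open Module

variable {E : Type*} [NormedAddCommGroup E] [InnerProductSpace ℝ E]

lemma exists_mem_forall_inner_sub_nonpos {K : Set E} (hne : K.Nonempty) (hK : IsComplete K)
    (hconv : Convex ℝ K) (x : E) : ∃ p ∈ K, ∀ y ∈ K, inner ℝ (x - p) (y - p) ≤ 0 := by
  obtain ⟨p, hpK, hp⟩ := exists_norm_eq_iInf_of_complete_convex hne hK hconv x
  exact ⟨p, hpK, (norm_eq_iInf_iff_real_inner_le_zero hconv hpK).1 hp⟩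

lemma mem_add_closedBall_of_forall_exists_inner_le {K : Set E} (hne : K.Nonempty)
    (hK : IsComplete K) (hconv : Convex ℝ K) {v : E} {δ : ℝ} (hδ : 0 ≤ δ)
    (h : ∀ u : E, ‖u‖ = 1 → ∃ y ∈ K, inner ℝ u (v - y) ≤ δ) : v ∈ K + closedBall 0 δ := by
  obtain ⟨q, hqK, hq⟩ := exists_mem_forall_inner_sub_nonpos hne hK hconv v
  refine ⟨q, hqK, v - q, mem_closedBall_zero_iff.2 ?_, by simp⟩
  rcases eq_or_ne (v - q) 0 with hvq | hvq
  · simpa [hvq] using hδ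
  obtain ⟨y, hyK, hy⟩ := h (‖v - q‖⁻¹ • (v - q)) (norm_smul_inv_norm (𝕜 := ℝ) hvq)
  have h_pos : 0 < ‖v - q‖ := norm_pos_iff.2 hvq
  have h_split : inner ℝ (v - q) (v - y) = ‖v - q‖ ^ 2 - inner ℝ (v - q) (y - q) := by
    rw [← real_inner_self_eq_norm_sq, ← inner_sub_right, sub_sub_sub_cancel_right]
  rw [real_inner_smul_left, inv_mul_le_iff₀ h_pos] at hy
  nlinarith [hq y hyK]

lemma four_mul_inner_le_norm_add_sq (x y : E) : 4 * inner ℝ x y ≤ ‖x + y‖ ^ 2 := by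
  nlinarith [norm_add_sq_real x y, norm_sub_sq_real x y, sq_nonneg ‖x - y‖]

lemma four_mul_inner_le_norm_add_sub_sq {x p w : E} (n : E) (h : inner ℝ (x - p) (w - p) ≤ 0) :
    4 * inner ℝ n (w - p) ≤ ‖w + n - x‖ ^ 2 :=
  calc 4 * inner ℝ n (w - p)
      ≤ 4 * inner ℝ (n - (x - p)) (w - p) := by rw [inner_sub_left]; linarith
    _ ≤ ‖n - (x - p) + (w - p)‖ ^ 2 := four_mul_inner_le_norm_add_sq _ _
    _ = ‖w + n - x‖ ^ 2 := by congr 2; abel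

lemma subset_add_closedBall_of_sphere_cover {S C X : Set E} (hS : IsCompact S) (hne : C.Nonempty)
    (hC : IsComplete C) (hconv : Convex ℝ C) {c : E} {r R ρ : ℝ} (hSr : S ⊆ closedBall c r)
    (hrR : r < R) (hX : sphere c R ⊆ ⋃ x ∈ X, closedBall x ρ)
    (hXC : ∀ x ∈ X, ∃ p ∈ C, ∀ w ∈ S, inner ℝ (x - p) (w - p) ≤ 0) :
    S ⊆ C + closedBall 0 (ρ ^ 2 / (4 * (R - r))) := by
  intro v hv
  have := sub_pos.2 hrR
  refine mem_add_closedBall_of_forall_exists_inner_le hne hC hconv (by positivity) fun u hu => ?_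
  obtain ⟨w, hwS, hw_max⟩ := hS.exists_isMaxOn ⟨v, hv⟩
    (by fun_prop : ContinuousOn (fun y => inner ℝ u y) S)
  obtain ⟨t, ht, hwt⟩ := exists_sub_le_add_smul_mem_sphere (hSr hwS) hrR.le hu
  obtain ⟨x, hxX, hx⟩ := Set.mem_iUnion₂.1 (hX hwt)
  obtain ⟨p, hpC, hp⟩ := hXC x hxX
  refine ⟨p, hpC, ?_⟩
  have hvw : inner ℝ u (v - p) ≤ inner ℝ u (w - p) := by
    rw [inner_sub_right, inner_sub_right]
    exact sub_le_sub_right (hw_max hv) _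
  have hwp : 4 * (t * inner ℝ u (w - p)) ≤ ρ ^ 2 :=
    calc 4 * (t * inner ℝ u (w - p))
        ≤ ‖w + t • u - x‖ ^ 2 := by
          rw [← real_inner_smul_left]
          exact four_mul_inner_le_norm_add_sub_sq (t • u) (hp w hwS)
      _ ≤ ρ ^ 2 := by gcongr; exact mem_closedBall_iff_norm.1 hx
  refine hvw.trans ?_
  rcases le_total (inner ℝ u (w - p)) 0 with h_neg | h_nonneg
  · exact h_neg.trans (by positivity)
  · rw [le_div_iff₀ (by positivity)]
    nlinarith

theorem exists_finset_convexHull_subset_of_sphere_cover [FiniteDimensional ℝ E] [Nontrivial E]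
    {S : Set E} (hS : IsCompact S) (hne : S.Nonempty) {c : E} {r R ρ : ℝ}
    (hSr : S ⊆ closedBall c r) (hrR : r < R) (X : Finset E)
    (hX : sphere c R ⊆ ⋃ x ∈ X, closedBall x ρ) :
    ∃ Q : Finset E, ↑Q ⊆ S ∧ Q.card ≤ X.card * (finrank ℝ E + 1) ∧
      convexHull ℝ S ⊆ convexHull ℝ (Q : Set E) + closedBall 0 (ρ ^ 2 / (4 * (R - r))) := by
  classical
  choose proj h_mem h_inner using exists_mem_forall_inner_sub_nonpos
    (convexHull_nonempty_iff.2 hne) (isCompact_convexHull hS).isComplete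
    (convex_convexHull ℝ S)
  obtain ⟨Q, hQS, hQ_card, hQ⟩ := exists_finset_card_le_of_subset_convexHull (X.image proj)
    (by simpa [Set.subset_def] using fun x _ => h_mem x)
  have h_projQ : ∀ x ∈ X, proj x ∈ convexHull ℝ (Q : Set E) := fun x hx =>
    hQ (Finset.mem_image_of_mem proj hx)
  have hQ_ne : (convexHull ℝ (Q : Set E)).Nonempty := by
    obtain ⟨v, hv⟩ := hne
    have hR : 0 ≤ R := (nonneg_of_mem_closedBall (hSr hv)).trans hrR.le
    obtain ⟨z, hz⟩ := NormedSpace.sphere_nonempty (x := c) |>.2 hR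
    obtain ⟨x, hxX, -⟩ := Set.mem_iUnion₂.1 (hX hz)
    exact ⟨_, h_projQ x hxX⟩
  refine ⟨Q, hQS, hQ_card.trans (Nat.mul_le_mul_right _ Finset.card_image_le), ?_⟩
  refine convexHull_min ?_ ((convex_convexHull ℝ _).add (convex_closedBall _ _))
  refine subset_add_closedBall_of_sphere_cover hS hQ_ne
    (Q.finite_toSet.isCompact_convexHull ℝ).isComplete (convex_convexHull ℝ _) hSr hrR hX ?_
  exact fun x hx => ⟨proj x, h_projQ x hx, fun w hw => h_inner x w (subset_convexHull ℝ S hw)⟩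

end InnerProductSpace

section Plane

open Complex Module

lemma dist_exp_mul_I_le (θ φ : ℝ) :
    dist (exp (θ * I)) (exp (φ * I)) ≤ |θ - φ| :=
  calc dist (exp (θ * I)) (exp (φ * I))
      = ‖exp (φ * I) * (exp (I * ↑(θ - φ)) - 1)‖ := by
        rw [Complex.dist_eq, mul_sub, mul_one, ← exp_add]
        congr 3
        push_cast
        ring
    _ = ‖exp (I * ↑(θ - φ)) - 1‖ := by
        rw [norm_mul, norm_exp_ofReal_mul_I, one_mul]
    _ ≤ |θ - φ| := Real.norm_exp_I_mul_ofReal_sub_one_le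

lemma exists_lt_abs_sub_arc_midpoint_le {θ : ℝ} (hθ : θ ∈ Set.Ioc (-Real.pi) Real.pi) {N : ℕ}
    (hN : 0 < N) : ∃ k < N, |θ - ((2 * k + 1) * (Real.pi / N) - Real.pi)| ≤ Real.pi / N := by
  have hN' : (0 : ℝ) < N := Nat.cast_pos.2 hN
  set δ := Real.pi / N
  have : 0 < δ := div_pos Real.pi_pos hN'
  have hNδ : N * δ = Real.pi := mul_div_cancel₀ _ hN'.ne'
  have hx_pos : 0 < (θ + Real.pi) / (2 * δ) := div_pos (by linarith [hθ.1]) (by positivity)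
  obtain ⟨k, hk⟩ := Nat.exists_eq_add_one.2 (Nat.ceil_pos.2 hx_pos)
  obtain ⟨hk_lt, hk_le⟩ := (Nat.ceil_eq_iff k.succ_ne_zero).1 hk
  rw [Nat.succ_sub_one, lt_div_iff₀ (by positivity)] at hk_lt
  rw [div_le_iff₀ (by positivity)] at hk_le
  push_cast at hk_le
  refine ⟨k, ?_, abs_le.2 ⟨by linarith, by linarith⟩⟩
  have hkN : (k : ℝ) * (2 * δ) < N * (2 * δ) := by linarith [hθ.2]
  exact_mod_cast lt_of_mul_lt_mul_right hkN (by positivity)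

lemma exists_finset_sphere_subset_iUnion_closedBall_complex (R : ℝ) {N : ℕ} (hN : 0 < N) :
    ∃ X : Finset ℂ, X.card ≤ N ∧
      sphere 0 R ⊆ ⋃ x ∈ X, closedBall x (R * (Real.pi / N)) := by
  classical
  set φ : ℕ → ℝ := fun k => (2 * k + 1) * (Real.pi / N) - Real.pi
  refine ⟨(Finset.range N).image fun k => R * exp (φ k * I),
    Finset.card_image_le.trans (Finset.card_range N).le, fun z hz => ?_⟩
  have hzR : ‖z‖ = R := mem_sphere_zero_iff_norm.1 hz
  obtain ⟨k, hkN, hk⟩ := exists_lt_abs_sub_arc_midpoint_le (arg_mem_Ioc z) hN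
  refine Set.mem_iUnion₂.2
    ⟨_, Finset.mem_image_of_mem _ (Finset.mem_range.2 hkN), mem_closedBall.2 ?_⟩
  calc dist z (R * exp (φ k * I))
      = R * dist (exp (z.arg * I)) (exp (φ k * I)) := by
        conv_lhs => rw [← norm_mul_exp_arg_mul_I z, hzR]
        rw [Complex.dist_eq, ← mul_sub, norm_mul, norm_real, ← hzR, norm_norm,
          ← Complex.dist_eq]
    _ ≤ R * |z.arg - φ k| := by gcongr; exacts [hzR ▸ norm_nonneg z, dist_exp_mul_I_le _ _]
    _ ≤ R * (Real.pi / N) := by gcongr; exact hzR ▸ norm_nonneg z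

lemma sq_pi_div_ceil_le {ε : ℝ} (hε : 0 < ε) : (Real.pi / ⌈Real.pi / √ε⌉₊) ^ 2 ≤ ε := by
  have h_sqrt : 0 < √ε := Real.sqrt_pos.2 hε
  refine (Real.le_sqrt (by positivity) hε.le).1 ?_
  exact (div_le_comm₀ (by positivity) h_sqrt).2 (Nat.le_ceil _)

lemma three_mul_ceil_le_ceil_ten_mul_add {x : ℝ} (hx : 0 ≤ x) : 3 * ⌈x⌉₊ ≤ ⌈10 * x⌉₊ + 15 := by
  have h : (3 * ⌈x⌉₊ : ℝ) ≤ ⌈10 * x⌉₊ + 15 := by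
    linarith [Nat.ceil_lt_add_one hx, Nat.le_ceil (10 * x)]
  exact_mod_cast h

variable {E : Type*} [NormedAddCommGroup E] [InnerProductSpace ℝ E]

lemma exists_finset_sphere_subset_iUnion_closedBall (hE : finrank ℝ E = 2) (c : E) (R : ℝ) {N : ℕ}
    (hN : 0 < N) : ∃ X : Finset E, X.card ≤ N ∧
      sphere c R ⊆ ⋃ x ∈ X, closedBall x (R * (Real.pi / N)) := by
  classical
  have : FiniteDimensional ℝ E := .of_finrank_eq_succ hE
  let e : E ≃ₗᵢ[ℝ] ℂ :=
    ((stdOrthonormalBasis ℝ E).reindex (finCongr hE)).equiv Complex.orthonormalBasisOneI (.refl _)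
  obtain ⟨X, hX_card, hX⟩ := exists_finset_sphere_subset_iUnion_closedBall_complex R hN
  refine ⟨X.image fun x => e.symm x + c, Finset.card_image_le.trans hX_card, fun z hz => ?_⟩
  have hez : e (z - c) ∈ sphere 0 R := by
    rwa [mem_sphere_zero_iff_norm, e.norm_map, ← mem_sphere_iff_norm]
  obtain ⟨x, hxX, hx⟩ := Set.mem_iUnion₂.1 (hX hez)
  refine Set.mem_iUnion₂.2 ⟨_, Finset.mem_image_of_mem _ hxX, ?_⟩
  rwa [mem_closedBall, ← dist_sub_eq_dist_add_left, ← e.dist_map, e.apply_symm_apply]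

theorem exists_finset_convexHull_subset_of_subset_closedBall (hE : finrank ℝ E = 2) {S : Set E}
    (hS : IsCompact S) (hne : S.Nonempty) {c : E} {r : ℝ} (hr : 0 < r) (hSr : S ⊆ closedBall c r)
    {ε : ℝ} (hε : 0 < ε) :
    ∃ Q : Finset E, ↑Q ⊆ S ∧ Q.card ≤ 3 * ⌈Real.pi / √ε⌉₊ ∧
      convexHull ℝ S ⊆ convexHull ℝ (Q : Set E) + closedBall 0 (ε * r) := by
  have : FiniteDimensional ℝ E := .of_finrank_eq_succ hE
  have : Nontrivial E := nontrivial_of_finrank_eq_succ hE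
  set N := ⌈Real.pi / √ε⌉₊
  have hN : 0 < N := by positivity
  -- The radius `R = 2 * r` minimises the error factor `R ^ 2 / (4 * (R - r))`.
  obtain ⟨X, hX_card, hX⟩ := exists_finset_sphere_subset_iUnion_closedBall hE c (2 * r) hN
  obtain ⟨Q, hQS, hQ_card, hQ⟩ :=
    exists_finset_convexHull_subset_of_sphere_cover hS hne hSr (by linarith) X hX
  refine ⟨Q, hQS, by rw [hE] at hQ_card; omega,
    hQ.trans (Set.add_subset_add_left (closedBall_subset_closedBall ?_))⟩
  calc (2 * r * (Real.pi / N)) ^ 2 / (4 * (2 * r - r))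
      = (Real.pi / N) ^ 2 * r := by field_simp; ring
    _ ≤ ε * r := by gcongr; exact sq_pi_div_ceil_le hε

theorem convex_polygon_approximation_general (hE : finrank ℝ E = 2) {S : Set E}
    (hS : IsCompact S) (hne : S.Nonempty) {ε : ℝ} (hε : 0 < ε) :
    ∃ Q : Finset E, ↑Q ⊆ S ∧ Q.card ≤ 3 * ⌈Real.pi / √ε⌉₊ ∧
      convexHull ℝ S ⊆ convexHull ℝ (Q : Set E) + closedBall 0 (ε * diam S) := by
  obtain ⟨c, hc⟩ := hne
  have hSc : S ⊆ closedBall c (diam S) := fun v hv => dist_le_diam_of_mem hS.isBounded hv hc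
  rcases (diam_nonneg (s := S)).eq_or_lt with hD | hD
  · have hS_eq : S = {c} := Set.Nonempty.subset_singleton_iff ⟨c, hc⟩ |>.1 <| by
      simpa only [← hD, closedBall_zero] using hSc
    refine ⟨{c}, by simpa using hc, ?_, by simp [hS_eq]⟩
    have : 0 < ⌈Real.pi / √ε⌉₊ := by positivity
    rw [Finset.card_singleton]
    omega
  · exact exists_finset_convexHull_subset_of_subset_closedBall hE hS ⟨c, hc⟩ hD hSc hε

end Plane

/-- Convex polygon approximation: for any nonempty finite point set `S` in the
plane and any `0 < ε ≤ 1`, there is a subset `Q ⊆ S` with at most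
`⌈10π/√ε⌉ + 15` points such that `conv S ⊆ conv Q + B(ε · diam S)`. -/
theorem convex_polygon_approximation
    (S : Finset (EuclideanSpace ℝ (Fin 2))) (hS : S.Nonempty)
    (ε : ℝ) (hε : 0 < ε) (hε1 : ε ≤ 1) :
    ∃ Q : Finset (EuclideanSpace ℝ (Fin 2)), Q ⊆ S ∧
      Q.card ≤ ⌈10 * Real.pi / Real.sqrt ε⌉₊ + 15 ∧
      convexHull ℝ (S : Set (EuclideanSpace ℝ (Fin 2))) ⊆
        convexHull ℝ (Q : Set (EuclideanSpace ℝ (Fin 2))) +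
          (closedBall (0 : EuclideanSpace ℝ (Fin 2)) (ε * diam (S : Set (EuclideanSpace ℝ (Fin 2))))) := by
  obtain ⟨Q, hQS, hQ_card, hQ⟩ := convex_polygon_approximation_general
    finrank_euclideanSpace_fin S.finite_toSet.isCompact hS hε
  rw [mul_div_assoc]
  exact ⟨Q, Finset.coe_subset.1 hQS,
    hQ_card.trans (three_mul_ceil_le_ceil_ten_mul_add (by positivity)), hQ⟩
end

section
/- Tightness of the convex polygon approximation lemma: there exist constants c > 0 and ε₀ > 0 such that for every ε with 0 < ε < ε₀ there is a nonempty finite set S of points in ℝ² (the vertex set of a suitable regular polygon inscribed in a circle of unit radius) with the property that every subset Q ⊆ S satisfying conv(S) ⊆ conv(Q) + B(ε · diam(S)) must have |Q| ≥ c/√ε. -/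
open Metric Pointwise

/-!
Let `S` be the vertex set of the regular `n`-gon inscribed in the unit circle. Distinct vertices are
at distance at least `4 / n`, so the line perpendicular to the radius through a vertex `x`, at
distance `(4 / n) ^ 2 / 2` below `x`, separates `x` from all other vertices. Hence a set `Q ⊆ S`
with `x ∉ Q` has `conv Q` at distance at least `8 / n ^ 2` from `x`. As `diam S ≤ 2`, an
approximation with `ε * n ^ 2 < 4` has to use all `n` vertices, and `n = ⌈1 / √ε⌉` is admissible
when `ε < 1`.
-/

section InnerProductSpace

variable {E : Type*} [NormedAddCommGroup E] [InnerProductSpace ℝ E] {c x q : E} {r R δ : ℝ}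

theorem dist_sq_le_two_mul_inner_of_mem_closedBall (hq : q ∈ closedBall c (dist x c)) :
    dist x q ^ 2 ≤ 2 * inner ℝ (x - c) (x - q) := by
  have hnorm : ‖q - c‖ ^ 2 ≤ ‖x - c‖ ^ 2 := by
    rw [mem_closedBall, dist_eq_norm, dist_eq_norm] at hq
    gcongr
  have hexpand : ‖q - c‖ ^ 2 =
      ‖x - c‖ ^ 2 - 2 * inner ℝ (x - c) (x - q) + ‖x - q‖ ^ 2 := by
    rw [← norm_sub_sq_real, sub_sub_sub_cancel_left]
  rw [dist_eq_norm]
  linarith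

theorem sq_le_two_mul_inner_of_mem_convexHull {Q : Set E} (hQ : Q ⊆ closedBall c (dist x c))
    (hδ : 0 ≤ δ) (hsep : ∀ q ∈ Q, δ ≤ dist x q) {y : E} (hy : y ∈ convexHull ℝ Q) :
    δ ^ 2 ≤ 2 * inner ℝ (x - c) (x - y) := by
  have hconvex : Convex ℝ {y : E | inner ℝ (x - c) y ≤ inner ℝ (x - c) x - δ ^ 2 / 2} :=
    convex_halfSpace_le (innerₗ E (x - c)).isLinear _
  have hsub : Q ⊆ {y : E | inner ℝ (x - c) y ≤ inner ℝ (x - c) x - δ ^ 2 / 2} := fun q hq ↦ by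
    have hcap : δ ^ 2 ≤ 2 * inner ℝ (x - c) (x - q) :=
      (pow_le_pow_left₀ hδ (hsep q hq) 2).trans
        (dist_sq_le_two_mul_inner_of_mem_closedBall (hQ hq))
    rw [inner_sub_right] at hcap
    rw [Set.mem_ofPred_eq]
    linarith
  have hy' : inner ℝ (x - c) y ≤ inner ℝ (x - c) x - δ ^ 2 / 2 := convexHull_min hsub hconvex hy
  rw [inner_sub_right]
  linarith

theorem sq_le_of_mem_convexHull_add_closedBall {Q : Set E} (hQ : Q ⊆ closedBall c (dist x c))
    (hδ : 0 ≤ δ) (hsep : ∀ q ∈ Q, δ ≤ dist x q)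
    (hx : x ∈ convexHull ℝ Q + closedBall (0 : E) r) :
    δ ^ 2 ≤ 2 * dist x c * r := by
  obtain ⟨y, hy, b, hb, rfl⟩ := hx
  calc δ ^ 2 ≤ 2 * inner ℝ (y + b - c) (y + b - y) :=
        sq_le_two_mul_inner_of_mem_convexHull hQ hδ hsep hy
    _ = 2 * inner ℝ (y + b - c) b := by rw [add_sub_cancel_left]
    _ ≤ 2 * (‖y + b - c‖ * ‖b‖) := by gcongr; exact real_inner_le_norm _ _
    _ ≤ 2 * (‖y + b - c‖ * r) := by gcongr; exact mem_closedBall_zero_iff.1 hb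
    _ = 2 * dist (y + b) c * r := by rw [dist_eq_norm, mul_assoc]

theorem subset_of_subset_convexHull_add_closedBall {S Q : Set E} (hS : S ⊆ sphere c R)
    (hδ : 0 ≤ δ) (hsep : S.Pairwise fun x y ↦ δ ≤ dist x y) (hr : 2 * R * r < δ ^ 2)
    (hQS : Q ⊆ S) (hcover : S ⊆ convexHull ℝ Q + closedBall (0 : E) r) :
    S ⊆ Q := by
  intro x hx
  by_contra hxQ
  have hxR : dist x c = R := hS hx
  have hQball : Q ⊆ closedBall c (dist x c) :=
    hxR ▸ (hQS.trans hS).trans sphere_subset_closedBall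
  have hsepx : ∀ q ∈ Q, δ ≤ dist x q := fun q hq ↦
    hsep hx (hQS hq) (ne_of_mem_of_not_mem hq hxQ).symm
  have := sq_le_of_mem_convexHull_add_closedBall hQball hδ hsepx (hcover hx)
  rw [hxR] at this
  linarith

end InnerProductSpace

section RootsOfUnity

open Complex
open scoped Real

variable {n : ℕ} {z w : ℂ}

theorem two_pi_div_le_abs_arg_of_pow_eq_one (hn : n ≠ 0) (hz : z ^ n = 1) (hz1 : z ≠ 1) :
    2 * π / n ≤ |arg z| := by
  have hexp : exp (arg z * I) = z := by
    simpa [norm_eq_one_of_pow_eq_one hz hn] using norm_mul_exp_arg_mul_I z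
  obtain ⟨m, hm⟩ : ∃ m : ℤ, n * (arg z * I) = m * (2 * π * I) := by
    rw [← exp_eq_one_iff, exp_nat_mul, hexp, hz]
  have harg : arg z * n = m * (2 * π) := by
    have : (arg z * n : ℂ) = m * (2 * π) := mul_right_cancel₀ I_ne_zero (by linear_combination hm)
    exact_mod_cast this
  have hm0 : m ≠ 0 := by
    rintro rfl
    have harg0 : arg z = 0 := by simpa [hn] using harg
    exact hz1 (by rw [← hexp, harg0, ofReal_zero, zero_mul, exp_zero])
  have hm1 : (1 : ℝ) ≤ |(m : ℝ)| := by exact_mod_cast Int.one_le_abs hm0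
  rw [div_le_iff₀ (by positivity)]
  calc 2 * π ≤ |(m : ℝ)| * (2 * π) := le_mul_of_one_le_left (by positivity) hm1
    _ = |arg z * n| := by rw [harg, abs_mul, abs_of_pos Real.two_pi_pos]
    _ = |arg z| * n := by rw [abs_mul, Nat.abs_cast]

theorem four_div_le_dist_of_pow_eq_one (hn : n ≠ 0) (hz : z ^ n = 1) (hw : w ^ n = 1)
    (hzw : z ≠ w) : 4 / n ≤ dist z w := by
  have hznorm : ‖z‖ = 1 := norm_eq_one_of_pow_eq_one hz hn
  have hwnorm : ‖w‖ = 1 := norm_eq_one_of_pow_eq_one hw hn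
  have hz0 : z ≠ 0 := norm_ne_zero_iff.1 (by simp [hznorm])
  have hw0 : w ≠ 0 := norm_ne_zero_iff.1 (by simp [hwnorm])
  have hangle : 2 * π / n ≤ InnerProductGeometry.angle z w := by
    rw [angle_eq_abs_arg hz0 hw0]
    exact two_pi_div_le_abs_arg_of_pow_eq_one hn (by rw [div_pow, hz, hw, div_one])
      (div_ne_one_of_ne hzw)
  calc (4 : ℝ) / n = 2 / π * (2 * π / n) := by field_simp; norm_num
    _ ≤ 2 / π * InnerProductGeometry.angle z w := by gcongr
    _ ≤ dist z w := by
      rw [dist_eq_norm]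
      exact mul_angle_le_norm_sub hznorm hwnorm

end RootsOfUnity

/-- The vertex set of the regular `n`-gon inscribed in the unit circle with a vertex at `(1, 0)`,
encoded as the image of the complex `n`-th roots of unity under `ℂ ≃ ℝ²`. -/
noncomputable def regularPolygon (n : ℕ) : Finset (EuclideanSpace ℝ (Fin 2)) :=
  (Polynomial.nthRootsFinset n (1 : ℂ)).map
    Complex.orthonormalBasisOneI.repr.toEquiv.toEmbedding

namespace regularPolygon

variable {n : ℕ}

theorem card_eq (hn : n ≠ 0) : (regularPolygon n).card = n := by
  rw [regularPolygon, Finset.card_map, (Complex.isPrimitiveRoot_exp n hn).card_nthRootsFinset]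

theorem exists_pow_eq_one_of_mem (hn : n ≠ 0) {x : EuclideanSpace ℝ (Fin 2)}
    (hx : x ∈ regularPolygon n) :
    ∃ z : ℂ, z ^ n = 1 ∧ Complex.orthonormalBasisOneI.repr z = x := by
  obtain ⟨z, hz, hzx⟩ := Finset.mem_map.1 hx
  exact ⟨z, (Polynomial.mem_nthRootsFinset hn.pos _).1 hz, hzx⟩

theorem subset_sphere (hn : n ≠ 0) :
    (regularPolygon n : Set (EuclideanSpace ℝ (Fin 2))) ⊆ sphere 0 1 := by
  intro x hx
  obtain ⟨z, hz, rfl⟩ := exists_pow_eq_one_of_mem hn hx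
  rw [mem_sphere_zero_iff_norm, LinearIsometryEquiv.norm_map,
    Complex.norm_eq_one_of_pow_eq_one hz hn]

theorem diam_le_two (hn : n ≠ 0) :
    diam (regularPolygon n : Set (EuclideanSpace ℝ (Fin 2))) ≤ 2 := by
  have hball := (subset_sphere hn).trans sphere_subset_closedBall
  simpa using (diam_mono hball isBounded_closedBall).trans (diam_closedBall zero_le_one)

theorem pairwise_four_div_le_dist (hn : n ≠ 0) :
    (regularPolygon n : Set (EuclideanSpace ℝ (Fin 2))).Pairwise
      fun x y ↦ 4 / (n : ℝ) ≤ dist x y := by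
  intro x hx y hy hxy
  obtain ⟨z, hz, rfl⟩ := exists_pow_eq_one_of_mem hn hx
  obtain ⟨w, hw, rfl⟩ := exists_pow_eq_one_of_mem hn hy
  rw [LinearIsometryEquiv.dist_map]
  exact four_div_le_dist_of_pow_eq_one hn hz hw (ne_of_apply_ne _ hxy)

theorem le_card_of_convexHull_subset (hn : n ≠ 0) {ε : ℝ} (hε : 0 ≤ ε) (hεn : ε * n ^ 2 < 4)
    {Q : Finset (EuclideanSpace ℝ (Fin 2))} (hQ : Q ⊆ regularPolygon n)
    (hcover : convexHull ℝ (regularPolygon n : Set (EuclideanSpace ℝ (Fin 2))) ⊆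
      convexHull ℝ (Q : Set (EuclideanSpace ℝ (Fin 2))) +
        closedBall (0 : EuclideanSpace ℝ (Fin 2))
          (ε * diam (regularPolygon n : Set (EuclideanSpace ℝ (Fin 2))))) :
    n ≤ Q.card := by
  have hradius : 2 * 1 * (ε * diam (regularPolygon n : Set (EuclideanSpace ℝ (Fin 2)))) <
      (4 / (n : ℝ)) ^ 2 :=
    calc _ ≤ 2 * 1 * (ε * 2) := by gcongr; exact diam_le_two hn
      _ < (4 / (n : ℝ)) ^ 2 := by
        rw [div_pow, lt_div_iff₀ (by positivity)]
        linarith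
  have hsub := subset_of_subset_convexHull_add_closedBall (subset_sphere hn) (by positivity)
    (pairwise_four_div_le_dist hn) hradius (Finset.coe_subset.2 hQ)
    ((subset_convexHull ℝ _).trans hcover)
  calc n = (regularPolygon n).card := (card_eq hn).symm
    _ ≤ Q.card := Finset.card_le_card (Finset.coe_subset.1 hsub)

end regularPolygon

theorem mul_sq_ceil_one_div_sqrt_lt_four {ε : ℝ} (hε : 0 < ε) (hε1 : ε < 1) :
    ε * (⌈1 / √ε⌉₊ : ℝ) ^ 2 < 4 := by
  have hsqrt1 : √ε < 1 := (Real.sqrt_lt' one_pos).2 (by simpa using hε1)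
  have hlt : √ε * ⌈1 / √ε⌉₊ < 2 :=
    calc √ε * ⌈1 / √ε⌉₊ < √ε * (1 / √ε + 1) := by
          gcongr
          exact Nat.ceil_lt_add_one (by positivity)
      _ = 1 + √ε := by field_simp
      _ < 2 := by linarith
  calc ε * (⌈1 / √ε⌉₊ : ℝ) ^ 2 = (√ε * ⌈1 / √ε⌉₊) ^ 2 := by rw [mul_pow, Real.sq_sqrt hε.le]
    _ < 2 ^ 2 := by gcongr
    _ = 4 := by norm_num

/-- Tightness of the convex polygon approximation lemma: there are constants
`c > 0` and `ε₀ > 0` such that for every `0 < ε < ε₀` there is a nonempty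
finite planar point set `S` for which any subset `Q ⊆ S` with
`conv S ⊆ conv Q + B(ε · diam S)` has at least `c/√ε` points. -/
theorem convex_polygon_approximation_tight :
    ∃ c : ℝ, 0 < c ∧ ∃ ε₀ : ℝ, 0 < ε₀ ∧ ∀ ε : ℝ, 0 < ε → ε < ε₀ →
      ∃ S : Finset (EuclideanSpace ℝ (Fin 2)), S.Nonempty ∧
        ∀ Q : Finset (EuclideanSpace ℝ (Fin 2)), Q ⊆ S →
          convexHull ℝ (S : Set (EuclideanSpace ℝ (Fin 2))) ⊆
            convexHull ℝ (Q : Set (EuclideanSpace ℝ (Fin 2))) +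
              (closedBall (0 : EuclideanSpace ℝ (Fin 2))
                (ε * diam (S : Set (EuclideanSpace ℝ (Fin 2))))) →
          c / Real.sqrt ε ≤ (Q.card : ℝ) := by
  refine ⟨1, one_pos, 1, one_pos, fun ε hε hε1 ↦ ?_⟩
  have hn : ⌈1 / √ε⌉₊ ≠ 0 := (Nat.ceil_pos.2 (by positivity)).ne'
  have hne : (regularPolygon ⌈1 / √ε⌉₊).Nonempty := by
    rw [← Finset.card_ne_zero, regularPolygon.card_eq hn]
    exact hn
  refine ⟨regularPolygon ⌈1 / √ε⌉₊, hne, fun Q hQ hcover ↦ ?_⟩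
  calc 1 / √ε ≤ (⌈1 / √ε⌉₊ : ℝ) := Nat.le_ceil _
    _ ≤ (Q.card : ℝ) := Nat.cast_le.2 <| regularPolygon.le_card_of_convexHull_subset hn hε.le
      (mul_sq_ceil_one_div_sqrt_lt_four hε hε1) hQ hcover
end

section
/- Perimeter of an outer parallel body in the plane: let K be a nonempty compact convex subset of ℝ² with nonempty interior, and let r ≥ 0. Then the perimeter of the Minkowski sum K + B(r) equals the perimeter of K plus 2πr, where the perimeter of a planar convex body is the one-dimensional Hausdorff measure of its topological boundary: ℋ¹(∂(K + B(r))) = ℋ¹(∂K) + 2πr. -/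
open Metric Pointwise MeasureTheory

/-!
Perimeter is monotone under inclusion of convex bodies: for `K ⊆ L`, moving each boundary point of
`K` along an outer normal until it meets `∂L` does not decrease distances.

For a polygon `P`, the boundary of `P + B(r)` consists of the edges of `P`, each translated by `r`
times its normal, and of the arcs `p + r • N(p)`, where `N(p)` is the set of outer unit normals at
the vertex `p`. These pieces overlap only in finitely many points and the sets `N(p)` tile the unit
circle, so the arcs contribute `2πr`, while the total length of the edges is the case `r = 0`.

A convex body `K` fits, for every `t > 1`, between a polygon and the dilate of `K` by `t` about an
interior point; the theorem follows by monotonicity as `t → 1`.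
-/

open Set Filter Topology Module
open scoped RealInnerProductSpace ENNReal

section Hausdorff

lemma hausdorffMeasure_eq_zero_of_finite {X : Type*} [EMetricSpace X] [MeasurableSpace X]
    [BorelSpace X] {d : ℝ} (hd : 0 < d) {s : Set X} (hs : s.Finite) : μH[d] s = 0 :=
  have := Measure.nullSingletonClass_hausdorff X hd
  hs.measure_zero _

lemma edist_le_hausdorffMeasure_of_isPreconnected {X : Type*} [MetricSpace X]
    [MeasurableSpace X] [BorelSpace X] {s : Set X} (hs : IsPreconnected s) {x y : X}
    (hx : x ∈ s) (hy : y ∈ s) : edist x y ≤ μH[1] s := by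
  have hIcc : Icc 0 (dist x y) ⊆ dist x '' s :=
    (hs.image _ (by fun_prop)).Icc_subset ⟨x, hx, dist_self x⟩ ⟨y, hy, rfl⟩
  calc edist x y = volume (Icc 0 (dist x y)) := by simp [edist_dist]
    _ ≤ volume (dist x '' s) := measure_mono hIcc
    _ = μH[1] (dist x '' s) := by rw [hausdorffMeasure_real]
    _ ≤ μH[1] s := by
      simpa using (LipschitzWith.dist_right x).hausdorffMeasure_image_le zero_le_one s

lemma eVariationOn_le_hausdorffMeasure_image {α X : Type*} [ConditionallyCompleteLinearOrder α]
    [TopologicalSpace α] [OrderTopology α] [DenselyOrdered α] [MetricSpace X]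
    [MeasurableSpace X] [BorelSpace X] {f : α → X} {s : Set α} (hs : s.OrdConnected)
    (hf : ContinuousOn f s) (hinj : InjOn f s) : eVariationOn f s ≤ μH[1] (f '' s) := by
  refine iSup_le fun ⟨n, u, hu, hus⟩ ↦ ?_
  let arc (i : ℕ) : Set X := f '' Icc (u i) (u (i + 1))
  have hIcc (i : ℕ) : Icc (u i) (u (i + 1)) ⊆ s := hs.out (hus i) (hus (i + 1))
  have hle (i : ℕ) : u i ≤ u (i + 1) := hu i.le_succ
  have arc_null_inter : Pairwise fun i j ↦ AEDisjoint μH[1] (arc i) (arc j) := by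
    suffices hlt : ∀ i j, i < j → AEDisjoint μH[1] (arc i) (arc j) from
      fun i j hij ↦ hij.lt_or_gt.elim (hlt i j) fun hji ↦ (hlt j i hji).symm
    intro i j hij
    rw [AEDisjoint, ← hinj.image_inter (hIcc i) (hIcc j)]
    have hinter : Icc (u i) (u (i + 1)) ∩ Icc (u j) (u (j + 1)) ⊆ {u j} :=
      fun x hx ↦ le_antisymm (hx.1.2.trans (hu hij)) hx.2.1
    exact hausdorffMeasure_eq_zero_of_finite one_pos (((finite_singleton _).subset hinter).image f)
  have arc_closed (i : ℕ) : IsClosed (arc i) :=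
    (isCompact_Icc.image_of_continuousOn (hf.mono (hIcc i))).isClosed
  calc ∑ i ∈ Finset.range n, edist (f (u (i + 1))) (f (u i))
      ≤ ∑ i ∈ Finset.range n, μH[1] (arc i) := Finset.sum_le_sum fun i _ ↦
        edist_le_hausdorffMeasure_of_isPreconnected
          (isPreconnected_Icc.image f (hf.mono (hIcc i)))
          (mem_image_of_mem f (right_mem_Icc.2 (hle i)))
          (mem_image_of_mem f (left_mem_Icc.2 (hle i)))
    _ = μH[1] (⋃ i ∈ Finset.range n, arc i) :=
      (measure_biUnion_finset₀ (arc_null_inter.set_pairwise _)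
        fun i _ ↦ (arc_closed i).nullMeasurableSet).symm
    _ ≤ μH[1] (f '' s) := measure_mono (iUnion₂_subset fun i _ ↦ image_mono (hIcc i))

lemma dist_circleMap (c : ℂ) (R θ₁ θ₂ : ℝ) :
    dist (circleMap c R θ₁) (circleMap c R θ₂) = 2 * |R| * |Real.sin ((θ₁ - θ₂) / 2)| := by
  have hfactor : circleMap c R θ₁ - circleMap c R θ₂ =
      circleMap 0 R θ₂ * (Complex.exp (Complex.I * ↑(θ₁ - θ₂)) - 1) := by
    have : Complex.exp (θ₁ * Complex.I) =
        Complex.exp (θ₂ * Complex.I) * Complex.exp (Complex.I * ↑(θ₁ - θ₂)) := by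
      rw [← Complex.exp_add]; push_cast; ring_nf
    simp only [circleMap, this]; ring
  rw [dist_eq_norm, hfactor, norm_mul, norm_circleMap_zero,
    Complex.norm_exp_I_mul_ofReal_sub_one, norm_mul, Real.norm_ofNat, Real.norm_eq_abs]
  ring

lemma ofReal_mul_sinc_le_eVariationOn_circleMap (c : ℂ) (R : ℝ) {n : ℕ} (hn : n ≠ 0) :
    ENNReal.ofReal (2 * Real.pi * |R| * Real.sinc (Real.pi / n)) ≤
      eVariationOn (circleMap c R) (Icc 0 (2 * Real.pi)) := by
  have hn0 : (n : ℝ) ≠ 0 := Nat.cast_ne_zero.2 hn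
  have hchord (k : ℕ) : ENNReal.ofReal (2 * |R| * Real.sin (Real.pi / n)) ≤
      edist (circleMap c R ((k + 1 : ℕ) * (2 * Real.pi / n)))
        (circleMap c R (k * (2 * Real.pi / n))) := by
    rw [edist_dist, dist_circleMap]
    have hangle : ((k + 1 : ℕ) * (2 * Real.pi / n) - k * (2 * Real.pi / n)) / 2 = Real.pi / n := by
      push_cast; ring
    rw [hangle]
    gcongr
    exact le_abs_self _
  calc ENNReal.ofReal (2 * Real.pi * |R| * Real.sinc (Real.pi / n))
      = ∑ _k ∈ Finset.range n, ENNReal.ofReal (2 * |R| * Real.sin (Real.pi / n)) := by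
        rw [Finset.sum_const, Finset.card_range, nsmul_eq_mul, ← ENNReal.ofReal_natCast,
          ← ENNReal.ofReal_mul n.cast_nonneg, Real.sinc_of_ne_zero (by positivity)]
        congr 1
        field_simp
    _ ≤ ∑ k ∈ Finset.range n, _ := Finset.sum_le_sum fun k _ ↦ hchord k
    _ ≤ eVariationOn (circleMap c R) (Icc 0 (2 * Real.pi)) := by
      refine eVariationOn.sum_le_of_monotoneOn_Iic (u := fun k : ℕ ↦ k * (2 * Real.pi / n))
        (fun i _ j _ hij ↦ by dsimp only; gcongr) fun k hk ↦ ⟨by positivity, ?_⟩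
      calc (k : ℝ) * (2 * Real.pi / n) ≤ n * (2 * Real.pi / n) := by gcongr
        _ = 2 * Real.pi := by field_simp

lemma ofReal_le_eVariationOn_circleMap (c : ℂ) (R : ℝ) :
    ENNReal.ofReal (2 * Real.pi * |R|) ≤ eVariationOn (circleMap c R) (Icc 0 (2 * Real.pi)) := by
  have hlim : Tendsto (fun n : ℕ ↦ ENNReal.ofReal (2 * Real.pi * |R| * Real.sinc (Real.pi / n)))
      atTop (𝓝 (ENNReal.ofReal (2 * Real.pi * |R| * Real.sinc 0))) :=
    ENNReal.tendsto_ofReal (((Real.continuous_sinc.tendsto 0).comp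
      (tendsto_const_div_atTop_nhds_zero_nat Real.pi)).const_mul _)
  rw [Real.sinc_zero, mul_one] at hlim
  exact le_of_tendsto hlim ((eventually_ne_atTop 0).mono fun n hn ↦
    ofReal_mul_sinc_le_eVariationOn_circleMap c R hn)

lemma hausdorffMeasure_sphere_complex (c : ℂ) {R : ℝ} (hR : 0 < R) :
    μH[1] (sphere c R) = ENNReal.ofReal (2 * Real.pi * R) := by
  have himage : circleMap c R '' Ioc 0 (2 * Real.pi) = sphere c R := by
    rw [image_circleMap_Ioc, abs_of_pos hR]
  have hinj : InjOn (circleMap c R) (Ioc 0 (2 * Real.pi)) := by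
    simpa [uIoc_of_le Real.two_pi_pos.le] using
      injOn_circleMap_of_abs_sub_le (c := c) (a := 0) (b := 2 * Real.pi) hR.ne'
        (by simp [abs_of_pos Real.pi_pos])
  rw [← himage]
  apply le_antisymm
  · calc μH[1] (circleMap c R '' Ioc 0 (2 * Real.pi))
        ≤ Real.nnabs R * volume (Ioc 0 (2 * Real.pi)) := by
          simpa only [hausdorffMeasure_real, ENNReal.rpow_one] using
            (lipschitzWith_circleMap c R).hausdorffMeasure_image_le zero_le_one _
      _ = ENNReal.ofReal (2 * Real.pi * R) := by
        rw [Real.volume_Ioc, sub_zero, Real.nnabs_of_nonneg hR.le, mul_comm,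
          ENNReal.ofReal_mul' hR.le, ENNReal.ofReal]
        rfl
  · calc ENNReal.ofReal (2 * Real.pi * R)
        ≤ eVariationOn (circleMap c R) (Icc 0 (2 * Real.pi)) := by
          simpa only [abs_of_pos hR] using ofReal_le_eVariationOn_circleMap c R
      _ = eVariationOn (circleMap c R) (Ioc 0 (2 * Real.pi)) :=
        (eVariationOn.eVariationOn_Ioc_eq_Icc_of_continuousWithinAt
          (continuous_circleMap c R).continuousWithinAt).symm
      _ ≤ μH[1] (circleMap c R '' Ioc 0 (2 * Real.pi)) :=
        eVariationOn_le_hausdorffMeasure_image ordConnected_Ioc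
          (continuous_circleMap c R).continuousOn hinj

lemma hausdorffMeasure_sphere_of_finrank_eq_two {E : Type*} [NormedAddCommGroup E]
    [InnerProductSpace ℝ E] [MeasurableSpace E] [BorelSpace E] [Fact (finrank ℝ E = 2)] (c : E)
    {R : ℝ} (hR : 0 < R) : μH[1] (sphere c R) = ENNReal.ofReal (2 * Real.pi * R) := by
  have : FiniteDimensional ℝ E := .of_fact_finrank_eq_two
  let e : ℂ ≃ₗᵢ[ℝ] E := 
    Complex.isometryOfOrthonormal ((stdOrthonormalBasis ℝ E).reindex (finCongr Fact.out))
  rw [← e.apply_symm_apply c, ← e.image_sphere, e.isometry.hausdorffMeasure_image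
    (.inl zero_le_one), hausdorffMeasure_sphere_complex _ hR]

lemma hausdorffMeasure_one_smul {E : Type*} [NormedAddCommGroup E] [NormedSpace ℝ E]
    [MeasurableSpace E] [BorelSpace E] {r : ℝ} (hr : 0 ≤ r) (s : Set E) :
    μH[1] (r • s) = ENNReal.ofReal r * μH[1] s := by
  rcases hr.eq_or_lt with rfl | hr
  · rw [ENNReal.ofReal_zero, zero_mul]
    exact hausdorffMeasure_eq_zero_of_finite one_pos
      ((finite_singleton 0).subset (zero_smul_set_subset s))
  · rw [Measure.hausdorffMeasure_smul₀ zero_le_one hr.ne', NNReal.rpow_one, ENNReal.smul_def,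
      smul_eq_mul, ← Real.toNNReal_eq_nnnorm_of_nonneg hr.le, ENNReal.ofReal]

end Hausdorff

section SupportFace

variable {E : Type*} [NormedAddCommGroup E] [InnerProductSpace ℝ E] {C : Set E} {u v x y : E}

/-- The face of `C` in direction `u`: the points of `C` maximising `⟪u, ·⟫` over `C`. -/
def supportFace (C : Set E) (u : E) : Set E := (innerSL ℝ u).toExposed C

lemma mem_supportFace : x ∈ supportFace C u ↔ x ∈ C ∧ ∀ y ∈ C, ⟪u, y⟫ ≤ ⟪u, x⟫ := Iff.rfl

lemma isExposed_supportFace (C : Set E) (u : E) : IsExposed ℝ C (supportFace C u) :=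
  ContinuousLinearMap.toExposed.isExposed

/-- The Gauss image of `x`: the unit vectors `u` for which `C` lies in the half-space
`{y | ⟪u, y⟫ ≤ ⟪u, x⟫}`. It is empty unless `x ∈ C`. -/
def outerUnitNormals (C : Set E) (x : E) : Set E := {u | ‖u‖ = 1 ∧ x ∈ supportFace C u}

/-- The unit vectors in whose direction the face of `C` has more than one point; in the plane
these are the outer normals of the edges of `C`. -/
def edgeNormals (C : Set E) : Set E := {u | ‖u‖ = 1 ∧ (supportFace C u).Nontrivial}

lemma inner_sub_eq_zero_of_mem_supportFace (hx : x ∈ supportFace C u) (hy : y ∈ supportFace C u) :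
    ⟪u, x - y⟫ = 0 := by
  rw [inner_sub_right, sub_eq_zero]
  exact le_antisymm (hy.2 x hx.1) (hx.2 y hy.1)

lemma norm_sub_le_of_mem_supportFace (hx : x ∈ supportFace C u) (hy : y ∈ supportFace C v)
    {s t : ℝ} (hs : 0 ≤ s) (ht : 0 ≤ t) : ‖x - y‖ ≤ ‖(x + s • u) - (y + t • v)‖ := by
  have hu : 0 ≤ ⟪x - y, u⟫ := by
    rw [real_inner_comm, inner_sub_right, sub_nonneg]; exact hx.2 y hy.1
  have hv : ⟪x - y, v⟫ ≤ 0 := by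
    rw [real_inner_comm, inner_sub_right, sub_nonpos]; exact hy.2 x hx.1
  have hsq : ‖x - y‖ * ‖x - y‖ ≤ ‖x - y‖ * ‖(x + s • u) - (y + t • v)‖ :=
    calc ‖x - y‖ * ‖x - y‖ = ⟪x - y, x - y⟫ := (real_inner_self_eq_norm_mul_norm _).symm
      _ ≤ ⟪x - y, x - y⟫ + s * ⟪x - y, u⟫ - t * ⟪x - y, v⟫ := by
        linarith [mul_nonneg hs hu, mul_nonpos_of_nonneg_of_nonpos ht hv]
      _ = ⟪x - y, (x + s • u) - (y + t • v)⟫ := by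
        simp only [inner_sub_right, inner_add_right, real_inner_smul_right]; ring
      _ ≤ ‖x - y‖ * ‖(x + s • u) - (y + t • v)‖ := real_inner_le_norm _ _
  rcases (norm_nonneg (x - y)).eq_or_lt with h | h
  · rw [← h]; exact norm_nonneg _
  · exact le_of_mul_le_mul_left hsq h

lemma eq_of_mem_supportFace_of_add_smul_eq (hx : x ∈ supportFace C u) (hy : y ∈ supportFace C v)
    {r : ℝ} (hr : 0 ≤ r) (h : x + r • u = y + r • v) : x = y := by
  have := norm_sub_le_of_mem_supportFace hx hy hr hr
  rwa [h, sub_self, norm_zero, norm_le_zero_iff, sub_eq_zero] at this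

lemma supportFace_add (A B : Set E) (u : E) :
    supportFace (A + B) u = supportFace A u + supportFace B u := by
  ext z
  constructor
  · rintro ⟨⟨a, ha, b, hb, rfl⟩, hmax⟩
    refine ⟨a, ⟨ha, fun y hy ↦ ?_⟩, b, ⟨hb, fun y hy ↦ ?_⟩, rfl⟩
    · simpa [inner_add_right] using hmax _ (add_mem_add hy hb)
    · simpa [inner_add_right] using hmax _ (add_mem_add ha hy)
  · rintro ⟨a, ⟨ha, hamax⟩, b, ⟨hb, hbmax⟩, rfl⟩
    refine ⟨add_mem_add ha hb, ?_⟩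
    rintro _ ⟨a', ha', b', hb', rfl⟩
    simpa only [map_add] using add_le_add (hamax a' ha') (hbmax b' hb')

lemma supportFace_closedBall_zero (hu : ‖u‖ = 1) {r : ℝ} (hr : 0 ≤ r) :
    supportFace (closedBall 0 r) u = {r • u} := by
  have hinner : ⟪u, r • u⟫ = r := by
    rw [real_inner_smul_right, real_inner_self_eq_norm_sq, hu]; ring
  have hmem : r • u ∈ closedBall (0 : E) r := by
    rw [mem_closedBall_zero_iff, norm_smul, hu, mul_one, Real.norm_of_nonneg hr]
  ext y
  rw [mem_supportFace, mem_singleton_iff, mem_closedBall_zero_iff]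
  constructor
  · rintro ⟨hy, hmax⟩
    have hmax : r ≤ ⟪u, y⟫ := hinner ▸ hmax _ hmem
    have hy2 : ‖y‖ ^ 2 ≤ r ^ 2 := by gcongr
    have hsq : ‖y - r • u‖ ^ 2 ≤ 0 :=
      calc ‖y - r • u‖ ^ 2 = ‖y‖ ^ 2 - 2 * (r * ⟪u, y⟫) + r ^ 2 := by
            rw [norm_sub_sq_real, real_inner_smul_right, real_inner_comm, norm_smul, hu, mul_one,
              Real.norm_eq_abs, sq_abs]
        _ ≤ 0 := by linarith [mul_le_mul_of_nonneg_left hmax hr]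
    rwa [sq_nonpos_iff, norm_eq_zero, sub_eq_zero] at hsq
  · rintro rfl
    refine ⟨mem_closedBall_zero_iff.1 hmem, fun y hy ↦ ?_⟩
    calc ⟪u, y⟫ ≤ ‖u‖ * ‖y‖ := real_inner_le_norm u y
      _ ≤ ⟪u, r • u⟫ := by rw [hu, one_mul, hinner]; exact mem_closedBall_zero_iff.1 hy

lemma supportFace_add_closedBall (C : Set E) (hu : ‖u‖ = 1) {r : ℝ} (hr : 0 ≤ r) :
    supportFace (C + closedBall 0 r) u = r • u +ᵥ supportFace C u := by
  rw [supportFace_add, supportFace_closedBall_zero hu hr, add_comm, singleton_add]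
  rfl

lemma notMem_interior_of_mem_supportFace (hu : u ≠ 0) (hx : x ∈ supportFace C u) :
    x ∉ interior C := by
  intro hint
  have hmax : IsLocalMax (innerSL ℝ u) x :=
    eventually_of_mem (mem_interior_iff_mem_nhds.1 hint) hx.2
  have hzero : innerSL ℝ u = 0 := (innerSL ℝ u).fderiv.symm.trans hmax.fderiv_eq_zero
  exact hu (by simpa using DFunLike.congr_fun hzero u)

lemma supportFace_inter_supportFace_neg_eq_empty (hint : (interior C).Nonempty)
    (hu : u ≠ 0) :
    supportFace C u ∩ supportFace C (-u) = ∅ := by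
  refine eq_empty_of_forall_notMem fun x ⟨hx, hx'⟩ ↦ ?_
  obtain ⟨z, hz⟩ := hint
  have hle : ⟪u, x⟫ ≤ ⟪u, z⟫ := by simpa using hx'.2 z (interior_subset hz)
  exact notMem_interior_of_mem_supportFace hu
    ⟨interior_subset hz, fun y hy ↦ (hx.2 y hy).trans hle⟩ hz

lemma mem_frontier_iff_outerUnitNormals_nonempty [CompleteSpace E] (hC : Convex ℝ C)
    (hint : (interior C).Nonempty) :
    x ∈ frontier C ↔ (outerUnitNormals (closure C) x).Nonempty := by
  rw [frontier, ← hC.interior_closure_eq_interior_of_nonempty_interior hint]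
  constructor
  · rintro ⟨hx, hx_int⟩
    obtain ⟨f, hf⟩ := geometric_hahn_banach_open_point hC.closure.interior isOpen_interior hx_int
    have hle (y : E) (hy : y ∈ closure C) : f y ≤ f x := by
      refine closure_minimal (t := {y | f y ≤ f x}) (fun y hy ↦ (hf y ?_).le)
        (isClosed_le f.continuous continuous_const)
        (hC.closure_interior_eq_closure_of_nonempty_interior hint ▸ hy)
      exact interior_mono subset_closure hy
    let v := (InnerProductSpace.toDual ℝ E).symm f
    have hv (y : E) : ⟪v, y⟫ = f y := InnerProductSpace.toDual_symm_apply
    have hv0 : v ≠ 0 := by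
      obtain ⟨p, hp⟩ := hint
      intro h0
      have := hf p (interior_mono subset_closure hp)
      simp [← hv, h0] at this
    refine ⟨‖v‖⁻¹ • v, norm_smul_inv_norm hv0, hx, fun y hy ↦ ?_⟩
    simp only [innerSL_apply_apply, real_inner_smul_left, hv]
    exact mul_le_mul_of_nonneg_left (hle y hy) (by positivity)
  · rintro ⟨u, hu, hx⟩
    have hu0 : u ≠ 0 := ne_zero_of_norm_ne_zero (hu.trans_ne one_ne_zero)
    exact ⟨hx.1, notMem_interior_of_mem_supportFace hu0 hx⟩

end SupportFace

section Monotonicity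

lemma inter_frontier_nonempty_of_isPreconnected {X : Type*} [TopologicalSpace X] {s t : Set X}
    (hs : IsPreconnected s) (h : (s ∩ closure t).Nonempty) (hst : ¬ s ⊆ t) :
    (s ∩ frontier t).Nonempty := by
  obtain ⟨a, has, ha⟩ := h
  obtain ⟨b, hbs, hb⟩ := not_subset.1 hst
  by_contra hempty
  have hnot (z : X) (hz : z ∈ s) (hzt : z ∈ closure t) : z ∈ interior t :=
    by_contra fun hzi ↦ hempty ⟨z, hz, hzt, hzi⟩
  have hcover : s ⊆ interior t ∪ (closure t)ᶜ := fun z hz ↦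
    (em (z ∈ closure t)).imp_left (hnot z hz)
  obtain ⟨z, -, hzi, hzc⟩ := hs _ _ isOpen_interior isClosed_closure.isOpen_compl hcover
    ⟨a, has, hnot a has ha⟩ ⟨b, hbs, fun hbt ↦ hb (interior_subset (hnot b hbs hbt))⟩
  exact hzc (interior_subset_closure hzi)

lemma exists_add_smul_mem_frontier {E : Type*} [NormedAddCommGroup E] [NormedSpace ℝ E] {L : Set E}
    (hL : Bornology.IsBounded L) {x u : E} (hx : x ∈ closure L) (hu : u ≠ 0) :
    ∃ t : ℝ, 0 ≤ t ∧ x + t • u ∈ frontier L := by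
  let ray : Set E := (fun t : ℝ ↦ x + t • u) '' Ici 0
  have hray : IsPreconnected ray := isPreconnected_Ici.image _ (by fun_prop)
  have hxray : x ∈ ray := ⟨0, self_mem_Ici, by simp⟩
  have hunbounded : ¬ ray ⊆ L := fun hsub ↦ by
    obtain ⟨R, hR, hball⟩ := hL.subset_closedBall_lt 0 x
    have hnorm : 0 < ‖u‖ := norm_pos_iff.2 hu
    have hfar := hball (hsub ⟨(R + 1) / ‖u‖, mem_Ici.2 (by positivity), rfl⟩)
    rw [mem_closedBall_iff_norm, add_sub_cancel_left, norm_smul,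
      Real.norm_of_nonneg (by positivity), div_mul_cancel₀ _ hnorm.ne'] at hfar
    linarith
  obtain ⟨_, ⟨t, ht, rfl⟩, hfr⟩ :=
    inter_frontier_nonempty_of_isPreconnected hray ⟨x, hxray, hx⟩ hunbounded
  exact ⟨t, ht, hfr⟩

lemma hausdorffMeasure_frontier_mono {E : Type*} [NormedAddCommGroup E] [InnerProductSpace ℝ E]
    [CompleteSpace E] [MeasurableSpace E] [BorelSpace E] {d : ℝ} (hd : 0 ≤ d) {K L : Set E}
    (hK : Convex ℝ K) (hint : (interior K).Nonempty) (hL : Bornology.IsBounded L) (hKL : K ⊆ L) :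
    μH[d] (frontier K) ≤ μH[d] (frontier L) := by
  have hnormal (x : frontier K) : ∃ u : E, ‖u‖ = 1 ∧ (x : E) ∈ supportFace (closure K) u :=
    (mem_frontier_iff_outerUnitNormals_nonempty hK hint).1 x.2
  choose u hu hxu using hnormal
  have hexit (x : frontier K) : ∃ t : ℝ, 0 ≤ t ∧ (x : E) + t • u x ∈ frontier L :=
    exists_add_smul_mem_frontier hL (closure_mono hKL x.2.1)
      (ne_zero_of_norm_ne_zero ((hu x).trans_ne one_ne_zero))
  choose t ht hxt using hexit
  let exitPoint (x : frontier K) : E := x + t x • u x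
  have hanti : AntilipschitzWith 1 exitPoint := AntilipschitzWith.of_le_mul_dist fun x y ↦ by
    simpa [Subtype.dist_eq, dist_eq_norm] using
      norm_sub_le_of_mem_supportFace (hxu x) (hxu y) (ht x) (ht y)
  have hcoe : Isometry ((↑) : frontier K → E) := isometry_subtype_coe
  calc μH[d] (frontier K) = μH[d] (univ : Set (frontier K)) := by
        rw [← hcoe.hausdorffMeasure_image (.inl hd), image_univ, Subtype.range_coe]
    _ ≤ μH[d] (range exitPoint) := by
      simpa using hanti.le_hausdorffMeasure_image hd univ
    _ ≤ μH[d] (frontier L) := measure_mono (range_subset_iff.2 hxt)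

end Monotonicity

section Polytope

variable {E : Type*} [NormedAddCommGroup E] [InnerProductSpace ℝ E] {C V : Set E} {u x : E} {r : ℝ}

lemma supportFace_nonempty (hC : IsCompact C) (hne : C.Nonempty) (u : E) :
    (supportFace C u).Nonempty := by
  obtain ⟨x, hx, hmax⟩ := hC.exists_isMaxOn hne (innerSL ℝ u).continuous.continuousOn
  exact ⟨x, hx, hmax⟩

lemma supportFace_convexHull (hV : V.Finite) (u : E) :
    supportFace (convexHull ℝ V) u = convexHull ℝ (V ∩ supportFace (convexHull ℝ V) u) := by
  let F := supportFace (convexHull ℝ V) u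
  have hF : IsExposed ℝ (convexHull ℝ V) F := isExposed_supportFace _ u
  have hconv : Convex ℝ F := hF.convex (convex_convexHull ℝ V)
  have hext : F.extremePoints ℝ ⊆ V ∩ F := subset_inter
    (hF.isExtreme.extremePoints_subset_extremePoints.trans extremePoints_convexHull_subset)
    extremePoints_subset
  refine Subset.antisymm ?_ (convexHull_min inter_subset_right hconv)
  calc F = closure (convexHull ℝ (F.extremePoints ℝ)) :=
        (closure_convexHull_extremePoints (hF.isCompact (hV.isCompact_convexHull ℝ)) hconv).symm
    _ ⊆ closure (convexHull ℝ (V ∩ F)) := closure_mono (convexHull_mono hext)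
    _ = convexHull ℝ (V ∩ F) := (hV.inter_of_left F).isClosed_convexHull ℝ |>.closure_eq

lemma inter_supportFace_convexHull_nonempty (hV : V.Finite) (hne : V.Nonempty) (u : E) :
    (V ∩ supportFace (convexHull ℝ V) u).Nonempty := by
  rw [← convexHull_nonempty_iff (𝕜 := ℝ), ← supportFace_convexHull hV]
  exact supportFace_nonempty (hV.isCompact_convexHull ℝ) hne.convexHull u

lemma inter_supportFace_convexHull_nontrivial (hV : V.Finite)
    (hu : u ∈ edgeNormals (convexHull ℝ V)) :
    (V ∩ supportFace (convexHull ℝ V) u).Nontrivial := by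
  by_contra h
  have hsub := not_nontrivial_iff.1 h
  exact hu.2.not_subsingleton (by rwa [supportFace_convexHull hV, hsub.convex.convexHull_eq])

lemma mem_edgeNormals_or_mem_of_mem_supportFace_convexHull (hV : V.Finite) (hu : ‖u‖ = 1)
    (hx : x ∈ supportFace (convexHull ℝ V) u) : u ∈ edgeNormals (convexHull ℝ V) ∨ x ∈ V := by
  by_cases hF : (supportFace (convexHull ℝ V) u).Nontrivial
  · exact .inl ⟨hu, hF⟩
  · have hne := convexHull_nonempty_iff.1 (⟨x, hx.1⟩ : (convexHull ℝ V).Nonempty)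
    obtain ⟨p, hpV, hp⟩ := inter_supportFace_convexHull_nonempty hV hne u
    exact .inr (not_nontrivial_iff.1 hF hx hp ▸ hpV)

lemma isClosed_outerUnitNormals (C : Set E) (x : E) : IsClosed (outerUnitNormals C x) := by
  have heq : outerUnitNormals C x =
      {u | ‖u‖ = 1} ∩ ({_u | x ∈ C} ∩ ⋂ y ∈ C, {u | ⟪u, y⟫ ≤ ⟪u, x⟫}) := by
    ext; simp [outerUnitNormals, mem_supportFace]
  rw [heq]
  exact (isClosed_eq continuous_norm continuous_const).inter <| isClosed_const.inter <|
    isClosed_biInter fun y _ ↦ isClosed_le (by fun_prop) (by fun_prop)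

lemma isClosed_vadd_smul_outerUnitNormals [ProperSpace E] (C : Set E) (x : E) (r : ℝ) :
    IsClosed (x +ᵥ r • outerUnitNormals C x) := by
  have hcompact : IsCompact (outerUnitNormals C x) :=
    (isCompact_sphere (0 : E) 1).of_isClosed_subset (isClosed_outerUnitNormals C x)
      fun u hu ↦ mem_sphere_zero_iff_norm.2 hu.1
  exact ((hcompact.smul r).vadd x).isClosed

lemma interior_add_closedBall_nonempty {E : Type*} [SeminormedAddCommGroup E] {C : Set E}
    (hint : (interior C).Nonempty) {r : ℝ} (hr : 0 ≤ r) :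
    (interior (C + closedBall 0 r)).Nonempty :=
  hint.mono (interior_mono (subset_add_left C (mem_closedBall_self hr)))

variable [CompleteSpace E]

lemma frontier_add_closedBall (hC : IsCompact C) (hconv : Convex ℝ C)
    (hint : (interior C).Nonempty) (hr : 0 ≤ r) :
    frontier (C + closedBall 0 r) = ⋃ u ∈ sphere (0 : E) 1, r • u +ᵥ supportFace C u := by
  have hclosed : IsClosed (C + closedBall 0 r) := isClosed_closedBall.add_left_of_isCompact hC
  ext z
  rw [mem_frontier_iff_outerUnitNormals_nonempty (hconv.add (convex_closedBall 0 r))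
    (interior_add_closedBall_nonempty hint hr), hclosed.closure_eq]
  simp only [mem_iUnion₂, exists_prop, mem_sphere_zero_iff_norm]
  exact exists_congr fun u ↦ and_congr_right fun hu ↦ by rw [supportFace_add_closedBall C hu hr]

lemma frontier_convexHull_add_closedBall (hV : V.Finite)
    (hint : (interior (convexHull ℝ V)).Nonempty) (hr : 0 ≤ r) :
    frontier (convexHull ℝ V + closedBall 0 r) =
      (⋃ u ∈ edgeNormals (convexHull ℝ V), supportFace (convexHull ℝ V + closedBall 0 r) u) ∪
        ⋃ p ∈ V, p +ᵥ r • outerUnitNormals (convexHull ℝ V) p := by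
  rw [frontier_add_closedBall (hV.isCompact_convexHull ℝ) (convex_convexHull ℝ V) hint hr]
  apply Subset.antisymm
  · refine iUnion₂_subset fun u hu ↦ ?_
    rw [mem_sphere_zero_iff_norm] at hu
    rintro _ ⟨x, hx, rfl⟩
    rcases mem_edgeNormals_or_mem_of_mem_supportFace_convexHull hV hu hx with hedge | hxV
    · refine .inl (mem_biUnion hedge ?_)
      rw [supportFace_add_closedBall _ hu hr]
      exact vadd_mem_vadd_set hx
    · exact .inr (mem_biUnion hxV ⟨r • u, smul_mem_smul_set ⟨hu, hx⟩, add_comm _ _⟩)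
  · refine union_subset (iUnion₂_subset fun u hu ↦ ?_) (iUnion₂_subset fun p _ ↦ ?_)
    · rw [supportFace_add_closedBall _ hu.1 hr]
      exact subset_biUnion_of_mem (u := fun u ↦ r • u +ᵥ supportFace (convexHull ℝ V) u)
        (mem_sphere_zero_iff_norm.2 hu.1)
    · rintro _ ⟨_, ⟨u, ⟨hu, hpu⟩, rfl⟩, rfl⟩
      exact mem_biUnion (mem_sphere_zero_iff_norm.2 hu) ⟨p, hpu, add_comm _ _⟩

end Polytope

section Polygon

variable {E : Type*} [NormedAddCommGroup E] [InnerProductSpace ℝ E] [Fact (finrank ℝ E = 2)]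
  {C V : Set E} {u v w : E}

attribute [local instance] FiniteDimensional.of_fact_finrank_eq_two

lemma eq_or_eq_neg_of_inner_eq_zero (hv : v ≠ 0) (hu : ‖u‖ = 1) (hw : ‖w‖ = 1)
    (hvu : ⟪v, u⟫ = 0) (hvw : ⟪v, w⟫ = 0) : u = w ∨ u = -w := by
  have hw0 : w ≠ 0 := ne_zero_of_norm_ne_zero (hw.trans_ne one_ne_zero)
  obtain ⟨c, rfl⟩ := Submodule.mem_span_singleton.1
    (Submodule.mem_span_singleton_of_inner_eq_zero_of_inner_eq_zero hv hw0 hvu hvw)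
  rw [norm_smul, hw, mul_one, Real.norm_eq_abs] at hu
  rcases eq_or_eq_neg_of_abs_eq hu with rfl | rfl <;> simp

lemma finite_setOf_norm_eq_one_and_inner_eq_zero (hv : v ≠ 0) :
    {u : E | ‖u‖ = 1 ∧ ⟪v, u⟫ = 0}.Finite := by
  rcases eq_empty_or_nonempty {u : E | ‖u‖ = 1 ∧ ⟪v, u⟫ = 0} with h | ⟨w, hw, hvw⟩
  · rw [h]; exact finite_empty
  · exact (Set.toFinite {w, -w}).subset fun u hu ↦
      eq_or_eq_neg_of_inner_eq_zero hv hu.1 hw hu.2 hvw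

lemma finite_edgeNormals_convexHull (hV : V.Finite) : (edgeNormals (convexHull ℝ V)).Finite := by
  have hfinite : (⋃ pq ∈ V.offDiag, {u : E | ‖u‖ = 1 ∧ ⟪pq.1 - pq.2, u⟫ = 0}).Finite :=
    hV.offDiag.biUnion fun pq hpq ↦
      finite_setOf_norm_eq_one_and_inner_eq_zero (sub_ne_zero.2 (mem_offDiag.1 hpq).2.2)
  refine hfinite.subset fun u hu ↦ ?_
  obtain ⟨p, ⟨hpV, hp⟩, q, ⟨hqV, hq⟩, hpq⟩ := inter_supportFace_convexHull_nontrivial hV hu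
  exact mem_biUnion (x := (p, q)) (mem_offDiag.2 ⟨hpV, hqV, hpq⟩)
    ⟨hu.1, (real_inner_comm _ _).trans (inner_sub_eq_zero_of_mem_supportFace hp hq)⟩

lemma subsingleton_supportFace_inter_supportFace (hint : (interior C).Nonempty) (hu : ‖u‖ = 1)
    (hv : ‖v‖ = 1) (huv : u ≠ v) : (supportFace C u ∩ supportFace C v).Subsingleton := by
  intro x hx y hy
  by_contra hxy
  have hu0 : ⟪x - y, u⟫ = 0 := by
    rw [real_inner_comm]; exact inner_sub_eq_zero_of_mem_supportFace hx.1 hy.1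
  have hv0 : ⟪x - y, v⟫ = 0 := by
    rw [real_inner_comm]; exact inner_sub_eq_zero_of_mem_supportFace hx.2 hy.2
  rcases eq_or_eq_neg_of_inner_eq_zero (sub_ne_zero.2 hxy) hv hu hv0 hu0 with rfl | rfl
  · exact huv rfl
  · have hu0 : u ≠ 0 := ne_zero_of_norm_ne_zero (hu.trans_ne one_ne_zero)
    exact (supportFace_inter_supportFace_neg_eq_empty hint hu0).subset hx

variable [MeasurableSpace E] [BorelSpace E]

lemma tsum_hausdorffMeasure_outerUnitNormals_convexHull (hV : V.Finite) (hne : V.Nonempty) :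
    ∑' p : V, μH[1] (outerUnitNormals (convexHull ℝ V) (p : E)) =
      ENNReal.ofReal (2 * Real.pi) := by
  let P := convexHull ℝ V
  have hcover : ⋃ p ∈ V, outerUnitNormals P p = sphere (0 : E) 1 := by
    refine Subset.antisymm (iUnion₂_subset fun p _ u hu ↦ mem_sphere_zero_iff_norm.2 hu.1) ?_
    intro u hu
    obtain ⟨p, hpV, hp⟩ := inter_supportFace_convexHull_nonempty hV hne u
    exact mem_biUnion hpV ⟨mem_sphere_zero_iff_norm.1 hu, hp⟩
  have hoverlap : V.Pairwise fun p q ↦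
      AEDisjoint μH[1] (outerUnitNormals P p) (outerUnitNormals P q) := fun p _ q _ hpq ↦
    hausdorffMeasure_eq_zero_of_finite one_pos <| (finite_edgeNormals_convexHull hV).subset
      fun _ hu ↦ ⟨hu.1.1, p, hu.1.2, q, hu.2.2, hpq⟩
  calc ∑' p : V, μH[1] (outerUnitNormals P (p : E)) = μH[1] (⋃ p ∈ V, outerUnitNormals P p) :=
        (measure_biUnion₀ hV.countable hoverlap
          fun p _ ↦ (isClosed_outerUnitNormals P p).nullMeasurableSet).symm
    _ = ENNReal.ofReal (2 * Real.pi) := by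
      rw [hcover, hausdorffMeasure_sphere_of_finrank_eq_two 0 one_pos, mul_one]

variable {r : ℝ}

lemma hausdorffMeasure_biUnion_supportFace_add_closedBall (hV : V.Finite)
    (hint : (interior (convexHull ℝ V)).Nonempty) (hr : 0 ≤ r) :
    μH[1] (⋃ u ∈ edgeNormals (convexHull ℝ V), supportFace (convexHull ℝ V + closedBall 0 r) u) =
      ∑' u : edgeNormals (convexHull ℝ V), μH[1] (supportFace (convexHull ℝ V) (u : E)) := by
  have hclosed : IsClosed (convexHull ℝ V + closedBall 0 r) :=
    isClosed_closedBall.add_left_of_isCompact (hV.isCompact_convexHull ℝ)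
  have hoverlap : (edgeNormals (convexHull ℝ V)).Pairwise fun u v ↦
      AEDisjoint μH[1] (supportFace (convexHull ℝ V + closedBall 0 r) u)
        (supportFace (convexHull ℝ V + closedBall 0 r) v) := fun u hu v hv huv ↦
    hausdorffMeasure_eq_zero_of_finite one_pos (subsingleton_supportFace_inter_supportFace
      (interior_add_closedBall_nonempty hint hr) hu.1 hv.1 huv).finite
  rw [measure_biUnion₀ (finite_edgeNormals_convexHull hV).countable hoverlap
    fun u _ ↦ ((isExposed_supportFace _ u).isClosed hclosed).nullMeasurableSet]
  exact tsum_congr fun u ↦ by rw [supportFace_add_closedBall _ u.2.1 hr, measure_vadd]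

lemma hausdorffMeasure_biUnion_vadd_smul_outerUnitNormals (hV : V.Finite) (hne : V.Nonempty)
    (hr : 0 ≤ r) :
    μH[1] (⋃ p ∈ V, p +ᵥ r • outerUnitNormals (convexHull ℝ V) p) =
      ENNReal.ofReal (2 * Real.pi * r) := by
  let N (p : E) := outerUnitNormals (convexHull ℝ V) p
  have hdisjoint : V.PairwiseDisjoint fun p ↦ p +ᵥ r • N p := by
    intro p _ q _ hpq
    refine disjoint_left.2 ?_
    rintro _ ⟨_, ⟨u, hu, rfl⟩, rfl⟩ ⟨_, ⟨v, hv, rfl⟩, h⟩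
    exact hpq (eq_of_mem_supportFace_of_add_smul_eq hu.2 hv.2 hr h.symm)
  calc μH[1] (⋃ p ∈ V, p +ᵥ r • N p) = ∑' p : V, μH[1] ((p : E) +ᵥ r • N p) :=
        measure_biUnion hV.countable hdisjoint fun p _ ↦
          (isClosed_vadd_smul_outerUnitNormals _ p r).measurableSet
    _ = ∑' p : V, ENNReal.ofReal r * μH[1] (N p) :=
      tsum_congr fun p ↦ by rw [measure_vadd, hausdorffMeasure_one_smul hr]
    _ = ENNReal.ofReal (2 * Real.pi * r) := by
      rw [ENNReal.tsum_mul_left, tsum_hausdorffMeasure_outerUnitNormals_convexHull hV hne,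
        ← ENNReal.ofReal_mul hr, mul_comm]

lemma hausdorffMeasure_frontier_convexHull_add_closedBall_eq_tsum_add (hV : V.Finite)
    (hint : (interior (convexHull ℝ V)).Nonempty) (hr : 0 ≤ r) :
    μH[1] (frontier (convexHull ℝ V + closedBall 0 r)) =
      ∑' u : edgeNormals (convexHull ℝ V), μH[1] (supportFace (convexHull ℝ V) (u : E)) +
        ENNReal.ofReal (2 * Real.pi * r) := by
  have hne : V.Nonempty := convexHull_nonempty_iff.1 (hint.mono interior_subset)
  have hmeas : MeasurableSet (⋃ p ∈ V, p +ᵥ r • outerUnitNormals (convexHull ℝ V) p) :=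
    hV.measurableSet_biUnion fun p _ ↦ (isClosed_vadd_smul_outerUnitNormals _ p r).measurableSet
  have hoverlap : (⋃ u ∈ edgeNormals (convexHull ℝ V),
        supportFace (convexHull ℝ V + closedBall 0 r) u) ∩
      (⋃ p ∈ V, p +ᵥ r • outerUnitNormals (convexHull ℝ V) p) ⊆
      image2 (fun u p ↦ r • u +ᵥ p) (edgeNormals (convexHull ℝ V)) V := by
    rintro z ⟨hzu, hzp⟩
    obtain ⟨u, hu, hz⟩ := mem_iUnion₂.1 hzu
    obtain ⟨p, hp, _, ⟨v, hv, rfl⟩, rfl⟩ := mem_iUnion₂.1 hzp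
    rw [supportFace_add_closedBall _ hu.1 hr] at hz
    obtain ⟨x, hx, hxz⟩ := hz
    have hxp : x = p := eq_of_mem_supportFace_of_add_smul_eq hx hv.2 hr ((add_comm _ _).trans hxz)
    exact ⟨u, hu, p, hp, hxp ▸ hxz⟩
  rw [frontier_convexHull_add_closedBall hV hint hr, measure_union₀ hmeas.nullMeasurableSet
      (hausdorffMeasure_eq_zero_of_finite one_pos
        (((finite_edgeNormals_convexHull hV).image2 _ hV).subset hoverlap)),
    hausdorffMeasure_biUnion_supportFace_add_closedBall hV hint hr,
    hausdorffMeasure_biUnion_vadd_smul_outerUnitNormals hV hne hr]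

lemma hausdorffMeasure_frontier_convexHull_add_closedBall (hV : V.Finite)
    (hint : (interior (convexHull ℝ V)).Nonempty) (hr : 0 ≤ r) :
    μH[1] (frontier (convexHull ℝ V + closedBall 0 r)) =
      μH[1] (frontier (convexHull ℝ V)) + ENNReal.ofReal (2 * Real.pi * r) := by
  have hzero := hausdorffMeasure_frontier_convexHull_add_closedBall_eq_tsum_add hV hint le_rfl
  rw [closedBall_zero, add_singleton, mul_zero, ENNReal.ofReal_zero, add_zero] at hzero
  simp only [add_zero, image_id'] at hzero
  rw [hausdorffMeasure_frontier_convexHull_add_closedBall_eq_tsum_add hV hint hr, hzero]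

end Polygon

section Sandwich

variable {E : Type*} [NormedAddCommGroup E] [NormedSpace ℝ E] {K C : Set E} {x : E} {t r : ℝ}

lemma exists_finite_subset_convexHull_subset_homothety [FiniteDimensional ℝ E] (hK : Convex ℝ K)
    (hbdd : Bornology.IsBounded K) (hx : x ∈ interior K) (ht : 1 < t) :
    ∃ V : Set E, V.Finite ∧ K ⊆ convexHull ℝ V ∧
      convexHull ℝ V ⊆ AffineMap.homothety x t '' K := by
  have hnhds : AffineMap.homothety x t '' K ∈ 𝓝ˢ (closure K) :=
    mem_nhdsSet_iff_exists.2 ⟨_, isOpen_interior,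
      hK.closure_subset_interior_image_homothety_of_one_lt hx t ht, interior_subset⟩
  obtain ⟨V, hKV, hVK⟩ := hK.closure.exists_subset_interior_convexHull_finset_of_isCompact
    hbdd.isCompact_closure hnhds
  exact ⟨V, V.finite_toSet, subset_closure.trans (hKV.trans interior_subset), hVK⟩

lemma add_closedBall_subset_homothety_add_closedBall (hC : C ⊆ AffineMap.homothety x t '' K)
    (ht : 1 ≤ t) : C + closedBall 0 r ⊆ AffineMap.homothety x t '' (K + closedBall 0 r) := by
  rintro _ ⟨c, hc, b, hb, rfl⟩
  obtain ⟨k, hk, rfl⟩ := hC hc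
  have ht0 : 0 < t := one_pos.trans_le ht
  refine ⟨k + t⁻¹ • b, add_mem_add hk ?_, ?_⟩
  · rw [mem_closedBall_zero_iff] at hb ⊢
    rw [norm_smul, norm_inv, Real.norm_of_nonneg ht0.le]
    exact (mul_le_of_le_one_left (norm_nonneg b) (inv_le_one_of_one_le₀ ht)).trans hb
  · simp only [AffineMap.homothety_apply, vsub_eq_sub, vadd_eq_add, smul_sub, smul_add,
      smul_inv_smul₀ ht0.ne']
    abel

lemma isBounded_image_homothety (hK : Bornology.IsBounded K) (x : E) (t : ℝ) :
    Bornology.IsBounded (AffineMap.homothety x t '' K) := by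
  have hlip : LipschitzWith ‖t‖₊ (AffineMap.homothety x t) := .of_dist_le_mul fun y z ↦ by
    simp [AffineMap.homothety_apply, dist_smul₀]
  exact hlip.isBounded_image hK

lemma frontier_image_homothety (K : Set E) (x : E) (ht : t ≠ 0) :
    frontier (AffineMap.homothety x t '' K) = AffineMap.homothety x t '' frontier K := by
  let e : E ≃ₜ E :=
    (AffineEquiv.homothetyUnitsMulHom x (Units.mk0 t ht)).toEquiv.toHomeomorphOfContinuousOpen
      (AffineMap.homothety_continuous x t) (AffineMap.homothety_isOpenMap x t ht)
  exact (e.image_frontier K).symm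

lemma hausdorffMeasure_frontier_image_homothety [MeasurableSpace E] [BorelSpace E] (K : Set E)
    (x : E) (ht : 0 < t) :
    μH[1] (frontier (AffineMap.homothety x t '' K)) = ENNReal.ofReal t * μH[1] (frontier K) := by
  rw [frontier_image_homothety K x ht.ne', hausdorffMeasure_homothety_image zero_le_one x ht.ne',
    NNReal.rpow_one, ENNReal.smul_def, smul_eq_mul, ← Real.toNNReal_eq_nnnorm_of_nonneg ht.le,
    ENNReal.ofReal]

lemma le_of_forall_one_lt_le_ofReal_mul {a b : ℝ≥0∞}
    (h : ∀ t : ℝ, 1 < t → a ≤ ENNReal.ofReal t * b) : a ≤ b := by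
  have hlim : Tendsto (fun t : ℝ ↦ ENNReal.ofReal t * b) (𝓝[>] 1) (𝓝 (ENNReal.ofReal 1 * b)) :=
    ENNReal.Tendsto.mul_const
      (ENNReal.continuous_ofReal.continuousWithinAt (s := Ioi 1) (x := (1 : ℝ))) (.inl (by simp))
  rw [ENNReal.ofReal_one, one_mul] at hlim
  exact ge_of_tendsto hlim (eventually_mem_nhdsWithin.mono h)

end Sandwich

section Plane

variable {E : Type*} [NormedAddCommGroup E] [InnerProductSpace ℝ E] [Fact (finrank ℝ E = 2)]
  [MeasurableSpace E] [BorelSpace E] {K : Set E} {r : ℝ}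

attribute [local instance] FiniteDimensional.of_fact_finrank_eq_two

lemma hausdorffMeasure_frontier_add_closedBall_le (hK : Convex ℝ K)
    (hbdd : Bornology.IsBounded K) (hint : (interior K).Nonempty) (hr : 0 ≤ r) :
    μH[1] (frontier (K + closedBall 0 r)) ≤
      μH[1] (frontier K) + ENNReal.ofReal (2 * Real.pi * r) := by
  obtain ⟨x, hx⟩ := hint
  refine le_of_forall_one_lt_le_ofReal_mul fun t ht ↦ ?_
  have ht0 : 0 < t := one_pos.trans ht
  have ht1 : 1 ≤ ENNReal.ofReal t := ENNReal.one_le_ofReal.2 ht.le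
  obtain ⟨V, hV, hKV, hVK⟩ := exists_finite_subset_convexHull_subset_homothety hK hbdd hx ht
  have hVint : (interior (convexHull ℝ V)).Nonempty := ⟨x, interior_mono hKV hx⟩
  calc μH[1] (frontier (K + closedBall 0 r))
      ≤ μH[1] (frontier (convexHull ℝ V + closedBall 0 r)) :=
        hausdorffMeasure_frontier_mono zero_le_one (hK.add (convex_closedBall 0 r))
          (interior_add_closedBall_nonempty ⟨x, hx⟩ hr)
          ((hV.isCompact_convexHull ℝ).isBounded.add isBounded_closedBall)
          (add_subset_add_right hKV)
    _ = μH[1] (frontier (convexHull ℝ V)) + ENNReal.ofReal (2 * Real.pi * r) :=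
      hausdorffMeasure_frontier_convexHull_add_closedBall hV hVint hr
    _ ≤ μH[1] (frontier (AffineMap.homothety x t '' K)) + ENNReal.ofReal (2 * Real.pi * r) :=
      add_le_add (hausdorffMeasure_frontier_mono zero_le_one (convex_convexHull ℝ V) hVint
        (isBounded_image_homothety hbdd x t) hVK) le_rfl
    _ = ENNReal.ofReal t * μH[1] (frontier K) + 1 * ENNReal.ofReal (2 * Real.pi * r) := by
      rw [hausdorffMeasure_frontier_image_homothety K x ht0, one_mul]
    _ ≤ ENNReal.ofReal t * (μH[1] (frontier K) + ENNReal.ofReal (2 * Real.pi * r)) := by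
      rw [mul_add]; gcongr

lemma le_hausdorffMeasure_frontier_add_closedBall (hK : Convex ℝ K)
    (hbdd : Bornology.IsBounded K) (hint : (interior K).Nonempty) (hr : 0 ≤ r) :
    μH[1] (frontier K) + ENNReal.ofReal (2 * Real.pi * r) ≤
      μH[1] (frontier (K + closedBall 0 r)) := by
  obtain ⟨x, hx⟩ := hint
  refine le_of_forall_one_lt_le_ofReal_mul fun t ht ↦ ?_
  have ht0 : 0 < t := one_pos.trans ht
  obtain ⟨V, hV, hKV, hVK⟩ := exists_finite_subset_convexHull_subset_homothety hK hbdd hx ht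
  have hVint : (interior (convexHull ℝ V)).Nonempty := ⟨x, interior_mono hKV hx⟩
  calc μH[1] (frontier K) + ENNReal.ofReal (2 * Real.pi * r)
      ≤ μH[1] (frontier (convexHull ℝ V)) + ENNReal.ofReal (2 * Real.pi * r) :=
        add_le_add (hausdorffMeasure_frontier_mono zero_le_one hK ⟨x, hx⟩
          (hV.isCompact_convexHull ℝ).isBounded hKV) le_rfl
    _ = μH[1] (frontier (convexHull ℝ V + closedBall 0 r)) :=
      (hausdorffMeasure_frontier_convexHull_add_closedBall hV hVint hr).symm
    _ ≤ μH[1] (frontier (AffineMap.homothety x t '' (K + closedBall 0 r))) :=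
      hausdorffMeasure_frontier_mono zero_le_one
        ((convex_convexHull ℝ V).add (convex_closedBall 0 r))
        (interior_add_closedBall_nonempty hVint hr)
        (isBounded_image_homothety (hbdd.add isBounded_closedBall) x t)
        (add_closedBall_subset_homothety_add_closedBall hVK ht.le)
    _ = ENNReal.ofReal t * μH[1] (frontier (K + closedBall 0 r)) :=
      hausdorffMeasure_frontier_image_homothety _ x ht0

theorem perimeter_add_closedBall_general (hK : Convex ℝ K) (hbdd : Bornology.IsBounded K)
    (hint : (interior K).Nonempty) (hr : 0 ≤ r) :
    μH[1] (frontier (K + closedBall 0 r)) =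
      μH[1] (frontier K) + ENNReal.ofReal (2 * Real.pi * r) :=
  le_antisymm (hausdorffMeasure_frontier_add_closedBall_le hK hbdd hint hr)
    (le_hausdorffMeasure_frontier_add_closedBall hK hbdd hint hr)

end Plane

/-- Perimeter of an outer parallel body in the plane: for a compact convex body
`K ⊆ ℝ²` with nonempty interior and `r ≥ 0`, the perimeter of `K + B(r)` equals
the perimeter of `K` plus `2πr`. -/
theorem perimeter_add_closedBall
    (K : Set (EuclideanSpace ℝ (Fin 2))) (hK : K.Nonempty)
    (hKc : IsCompact K) (hKconv : Convex ℝ K)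
    (hKint : (interior K).Nonempty) (r : ℝ) (hr : 0 ≤ r) :
    μH[1] (frontier (K + closedBall (0 : EuclideanSpace ℝ (Fin 2)) r)) =
      μH[1] (frontier K) + ENNReal.ofReal (2 * Real.pi * r) :=
  have : Fact (finrank ℝ (EuclideanSpace ℝ (Fin 2)) = 2) := ⟨finrank_euclideanSpace_fin⟩
  perimeter_add_closedBall_general hKconv hKc.isBounded hKint hr
end

section
/- Diameter–perimeter inequality for planar convex bodies: if K is a nonempty compact convex subset of ℝ² with nonempty interior, then its perimeter is at most π times its diameter: ℋ¹(∂K) ≤ π · diam(K). -/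
open Metric MeasureTheory

/-!
Write `u φ` for the unit vector at angle `φ`. Every boundary point of a planar convex set maximizes
`⟪u φ, ·⟫` over its closure `C` for some `φ`. Cut the circle of normals into `2n` sectors
`(θₖ, θₖ₊₁]` of width `π / n`, and let `aₖ ∈ C` be the counterclockwise end of the face with normal
`u θₖ`. Two points with normals in one sector differ by a vector orthogonal to some `u ω` with `ω`
in that sector, so passing to the coordinate along `u (θₖ + π/2)` shrinks their distance by a factor
no smaller than `cos (π / n)`. Since faces move counterclockwise with their normals, this coordinate
lies between its values at `aₖ` and `aₖ₊₁`. Summation by parts turns the total length of these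
intervals into `∑ ⟪u (θₖ + π/2) - u (θₖ₊₁ + π/2), aₖ₊₁⟫`. Antipodal terms carry opposite vectors of
length at most `π / n`, so each of the `n` antipodal pairs contributes at most `(π / n) * diam C`.
Let `n → ∞`.
-/

open Set Function Module Filter Topology
open scoped Real

section HausdorffMeasure

variable {X Y : Type*} [MeasurableSpace X] [MeasurableSpace Y]

lemma hausdorffMeasure_le_mul_image_of_antilipschitzWith [EMetricSpace X] [BorelSpace X]
    [EMetricSpace Y] [BorelSpace Y] {s : Set X} {f : X → Y} {c : NNReal} {d : ℝ} (hd : 0 ≤ d)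
    (hf : AntilipschitzWith c (f ∘ ((↑) : s → X))) :
    μH[d] s ≤ c ^ d * μH[d] (f '' s) := by
  have hcoe : ((↑) : s → X) '' univ = s := by rw [image_univ, Subtype.range_coe]
  calc μH[d] s = μH[d] (univ : Set s) := by
        conv_lhs => rw [← hcoe]
        exact isometry_subtype_coe.hausdorffMeasure_image (.inl hd) univ
    _ ≤ c ^ d * μH[d] (f '' s) := by
        simpa only [image_comp, hcoe] using hf.le_hausdorffMeasure_image hd univ

lemma hausdorffMeasure_one_le_of_dist_le_mul_dist [MetricSpace X] [BorelSpace X] {s : Set X}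
    {f : X → ℝ} {c l r : ℝ} (hc : 0 ≤ c)
    (hdist : ∀ p ∈ s, ∀ q ∈ s, dist p q ≤ c * dist (f p) (f q)) (hmaps : MapsTo f s (Icc l r)) :
    μH[1] s ≤ ENNReal.ofReal (c * (r - l)) := by
  have hanti : AntilipschitzWith c.toNNReal (f ∘ ((↑) : s → X)) :=
    .of_le_mul_dist fun p q => by
      rw [Real.coe_toNNReal c hc]
      exact hdist p p.2 q q.2
  calc μH[1] s ≤ c.toNNReal * volume (f '' s) := by
        simpa only [ENNReal.rpow_one, hausdorffMeasure_real] using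
          hausdorffMeasure_le_mul_image_of_antilipschitzWith zero_le_one hanti
    _ ≤ c.toNNReal * volume (Icc l r) := by
        gcongr
        exact hmaps.image_subset
    _ = ENNReal.ofReal (c * (r - l)) := by
        rw [Real.volume_Icc, ENNReal.ofReal_mul hc]
        rfl

end HausdorffMeasure

section SupportPoints

variable {E : Type*} [NormedAddCommGroup E] [NormedSpace ℝ E]

/-- The support points of `C`: the points of `C` at which some nonzero continuous linear functional
attains its maximum over `C`. -/
def supportPoints (C : Set E) : Set E :=
  {p ∈ C | ∃ f : StrongDual ℝ E, f ≠ 0 ∧ IsMaxOn f C p}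

variable [FiniteDimensional ℝ E] {K : Set E}

lemma exists_dual_eq_of_interior_eq_empty (hK : Convex ℝ K) (hint : interior K = ∅)
    {p : E} (hp : p ∈ affineSpan ℝ K) :
    ∃ f : StrongDual ℝ E, f ≠ 0 ∧ ∀ x ∈ K, f x = f p := by
  have hspan : affineSpan ℝ K ≠ ⊤ := by
    rwa [Ne, ← hK.interior_nonempty_iff_affineSpan_eq_top, not_nonempty_iff_eq_empty]
  have hdir : (affineSpan ℝ K).direction < ⊤ :=
    lt_top_iff_ne_top.mpr fun h =>
      hspan ((AffineSubspace.direction_eq_top_iff_of_nonempty ⟨p, hp⟩).mp h)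
  obtain ⟨f, hf, hker⟩ := Submodule.exists_le_ker_of_lt_top _ hdir
  refine ⟨f.toContinuousLinearMap, by simpa using hf, fun x hx => ?_⟩
  have hmem : x - p ∈ (affineSpan ℝ K).direction :=
    AffineSubspace.vsub_mem_direction (subset_affineSpan ℝ K hx) hp
  exact sub_eq_zero.mp ((map_sub f x p).symm.trans (hker hmem))

lemma frontier_subset_supportPoints_closure (hK : Convex ℝ K) :
    frontier K ⊆ supportPoints (closure K) := by
  rintro p ⟨hp, hpint⟩
  refine ⟨hp, ?_⟩
  suffices ∃ f : StrongDual ℝ E, f ≠ 0 ∧ IsMaxOn f K p by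
    obtain ⟨f, hf, hmax⟩ := this
    exact ⟨f, hf, hmax.closure f.continuous.continuousOn⟩
  rcases (interior K).eq_empty_or_nonempty with hint | hint
  · have hpspan : p ∈ affineSpan ℝ K :=
      closure_minimal (subset_affineSpan ℝ K)
        (affineSpan ℝ K).closed_of_finiteDimensional hp
    obtain ⟨f, hf, hconst⟩ := exists_dual_eq_of_interior_eq_empty hK hint hpspan
    exact ⟨f, hf, fun x hx => (hconst x hx).le⟩
  · exact geometric_hahn_banach_of_nonempty_interior_point hK hpint hint

end SupportPoints

lemma exists_isMaxOn_isMaxOn_face {X : Type*} [TopologicalSpace X] {C : Set X}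
    (hC : IsCompact C) (hne : C.Nonempty) {f g : X → ℝ} (hf : Continuous f) (hg : Continuous g) :
    ∃ a ∈ C, IsMaxOn f C a ∧ IsMaxOn g {x ∈ C | f x = f a} a := by
  obtain ⟨m, hm, hmax⟩ := hC.exists_isMaxOn hne hf.continuousOn
  obtain ⟨a, ⟨ha, ham⟩, hamax⟩ :=
    (hC.inter_right (isClosed_eq hf continuous_const)).exists_isMaxOn ⟨m, hm, rfl⟩
      hg.continuousOn
  have hfa : f a = f m := ham
  exact ⟨a, ha, fun x hx => (hmax hx).trans_eq hfa.symm,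
    fun x hx => hamax ⟨hx.1, hx.2.trans hfa⟩⟩

section DirCoord

variable {E : Type*} [NormedAddCommGroup E] [InnerProductSpace ℝ E]

/-- The coordinate `x ↦ ⟪u θ, x⟫` along the unit vector `u θ = cos θ • b 0 + sin θ • b 1` of a plane
with orthonormal basis `b`. The coordinate along the perpendicular direction is
`dirCoord b (θ + π / 2)`. -/
noncomputable def dirCoord (b : OrthonormalBasis (Fin 2) ℝ E) (θ : ℝ) : StrongDual ℝ E :=
  innerSL ℝ (Real.cos θ • b 0 + Real.sin θ • b 1)

variable (b : OrthonormalBasis (Fin 2) ℝ E)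

lemma dirCoord_apply (θ : ℝ) (x : E) :
    dirCoord b θ x = Real.cos θ * inner ℝ (b 0) x + Real.sin θ * inner ℝ (b 1) x := by
  simp only [dirCoord, innerSL_apply_apply, inner_add_left, real_inner_smul_left]

lemma continuous_dirCoord_apply (x : E) : Continuous fun θ => dirCoord b θ x := by
  simp only [dirCoord_apply]
  fun_prop

lemma dirCoord_add_pi (θ : ℝ) : dirCoord b (θ + π) = -dirCoord b θ := by
  ext x
  simp only [dirCoord_apply, Real.cos_add_pi, Real.sin_add_pi, neg_apply]
  ring

lemma periodic_dirCoord : Periodic (dirCoord b) (2 * π) := fun θ => by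
  simp only [dirCoord, Real.cos_add_two_pi, Real.sin_add_two_pi]

lemma dirCoord_eq_cos_mul_add_sin_mul (θ φ : ℝ) (x : E) :
    dirCoord b φ x =
      Real.cos (φ - θ) * dirCoord b θ x + Real.sin (φ - θ) * dirCoord b (θ + π / 2) x := by
  have hcos : Real.cos φ = Real.cos (φ - θ) * Real.cos θ - Real.sin (φ - θ) * Real.sin θ := by
    rw [← Real.cos_add, sub_add_cancel]
  have hsin : Real.sin φ = Real.sin (φ - θ) * Real.cos θ + Real.cos (φ - θ) * Real.sin θ := by
    rw [← Real.sin_add, sub_add_cancel]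
  simp only [dirCoord_apply, Real.cos_add_pi_div_two, Real.sin_add_pi_div_two]
  linear_combination inner ℝ (b 0) x * hcos + inner ℝ (b 1) x * hsin

lemma norm_sq_eq_dirCoord_sq_add (θ : ℝ) (x : E) :
    ‖x‖ ^ 2 = dirCoord b θ x ^ 2 + dirCoord b (θ + π / 2) x ^ 2 := by
  rw [← b.sum_sq_norm_inner_right x]
  simp only [Fin.sum_univ_two, Real.norm_eq_abs, sq_abs, dirCoord_apply,
    Real.cos_add_pi_div_two, Real.sin_add_pi_div_two]
  linear_combination
    -(inner ℝ (b 0) x ^ 2 + inner ℝ (b 1) x ^ 2) * Real.sin_sq_add_cos_sq θ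

lemma abs_dirCoord_le_norm (θ : ℝ) (x : E) : |dirCoord b θ x| ≤ ‖x‖ :=
  abs_le_of_sq_le_sq
    ((le_add_of_nonneg_right (sq_nonneg _)).trans_eq (norm_sq_eq_dirCoord_sq_add b θ x).symm)
    (norm_nonneg x)

lemma dirCoord_sub_dirCoord (θ φ : ℝ) (x : E) :
    dirCoord b θ x - dirCoord b φ x =
      2 * Real.sin ((θ - φ) / 2) * dirCoord b ((θ + φ) / 2 + π / 2) x := by
  simp only [dirCoord_apply, Real.cos_add_pi_div_two, Real.sin_add_pi_div_two]
  linear_combination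
    inner ℝ (b 0) x * Real.cos_sub_cos θ φ + inner ℝ (b 1) x * Real.sin_sub_sin θ φ

lemma abs_dirCoord_sub_dirCoord_le (θ φ : ℝ) (x : E) :
    |dirCoord b θ x - dirCoord b φ x| ≤ |θ - φ| * ‖x‖ := by
  have hsin : 2 * |Real.sin ((θ - φ) / 2)| ≤ |θ - φ| := by
    have h := Real.abs_sin_le_abs (x := (θ - φ) / 2)
    rw [abs_div, abs_two] at h
    linarith
  rw [dirCoord_sub_dirCoord, abs_mul, abs_mul, abs_two]
  gcongr
  exact abs_dirCoord_le_norm b _ x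

lemma exists_pos_smul_dirCoord {f : StrongDual ℝ E} (hf : f ≠ 0) :
    ∃ r : ℝ, 0 < r ∧ ∃ φ ∈ Ioc (-π) π, f = r • dirCoord b φ := by
  let z : ℂ := ⟨f (b 0), f (b 1)⟩
  have hfz (x : E) : f x = z.re * inner ℝ (b 0) x + z.im * inner ℝ (b 1) x := by
    conv_lhs => rw [← b.sum_repr' x]
    simp only [z, Fin.sum_univ_two, map_add, map_smul, smul_eq_mul, mul_comm]
  have hz : z ≠ 0 := fun h => hf <| by
    ext x
    simp [hfz, h]
  refine ⟨‖z‖, norm_pos_iff.mpr hz, z.arg, z.arg_mem_Ioc, ?_⟩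
  ext x
  rw [hfz, ← z.norm_mul_cos_arg, ← z.norm_mul_sin_arg, smul_apply,
    dirCoord_apply, smul_eq_mul]
  ring

lemma exists_isMaxOn_dirCoord_of_mem_supportPoints {C : Set E} {p : E}
    (hp : p ∈ supportPoints C) : ∃ φ ∈ Ioc (-π) π, IsMaxOn (dirCoord b φ) C p := by
  obtain ⟨-, f, hf, hmax⟩ := hp
  obtain ⟨r, hr, φ, hφ, rfl⟩ := exists_pos_smul_dirCoord b hf
  exact ⟨φ, hφ, isMaxOn_iff.mpr fun x hx => le_of_mul_le_mul_left (hmax hx) hr⟩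

lemma norm_mul_cos_le_abs_dirCoord {α δ ω : ℝ} (hω : ω ∈ Icc α (α + δ)) (hδ : δ ≤ π) {x : E}
    (hx : dirCoord b ω x = 0) : ‖x‖ * Real.cos δ ≤ |dirCoord b (α + π / 2) x| := by
  have hnorm : ‖x‖ = |dirCoord b (ω + π / 2) x| := by
    rw [← sq_eq_sq₀ (norm_nonneg x) (abs_nonneg _), sq_abs, norm_sq_eq_dirCoord_sq_add b ω, hx]
    ring
  have hrot : dirCoord b (α + π / 2) x = Real.cos (ω - α) * dirCoord b (ω + π / 2) x := by
    rw [dirCoord_eq_cos_mul_add_sin_mul b ω, hx, mul_zero, zero_add, add_sub_right_comm,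
      Real.sin_add_pi_div_two, ← Real.cos_neg, neg_sub]
  calc ‖x‖ * Real.cos δ ≤ ‖x‖ * |Real.cos (ω - α)| := by
        gcongr
        refine le_trans ?_ (le_abs_self _)
        exact Real.cos_le_cos_of_nonneg_of_le_pi (by linarith [hω.1]) hδ (by linarith [hω.2])
    _ = |dirCoord b (α + π / 2) x| := by rw [hrot, abs_mul, ← hnorm, mul_comm]

end DirCoord

section Arcs

variable {E : Type*} [NormedAddCommGroup E] [InnerProductSpace ℝ E]

/-- `a` is the counterclockwise end of the face of `C` with outer normal `u θ`: it maximizes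
`dirCoord b θ` over `C` and, among all maximizers, the perpendicular coordinate. -/
structure IsFaceEnd (b : OrthonormalBasis (Fin 2) ℝ E) (C : Set E) (θ : ℝ) (a : E) : Prop where
  mem : a ∈ C
  isMaxOn : IsMaxOn (dirCoord b θ) C a
  isMaxOn_face : IsMaxOn (dirCoord b (θ + π / 2)) {x ∈ C | dirCoord b θ x = dirCoord b θ a} a

/-- The points of `C` having an outer normal `u φ` with `φ ∈ (α, β]`. -/
def supportArc (b : OrthonormalBasis (Fin 2) ℝ E) (C : Set E) (α β : ℝ) : Set E :=
  {p ∈ C | ∃ φ ∈ Ioc α β, IsMaxOn (dirCoord b φ) C p}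

variable {b : OrthonormalBasis (Fin 2) ℝ E} {C : Set E} {α β δ : ℝ}

lemma exists_periodic_isFaceEnd (b : OrthonormalBasis (Fin 2) ℝ E) (hC : IsCompact C)
    (hne : C.Nonempty) : ∃ a : ℝ → E, Periodic a (2 * π) ∧ ∀ θ, IsFaceEnd b C θ (a θ) := by
  choose a hmem hmax hface using fun f g : StrongDual ℝ E =>
    exists_isMaxOn_isMaxOn_face hC hne f.continuous g.continuous
  refine ⟨fun θ => a (dirCoord b θ) (dirCoord b (θ + π / 2)), fun θ => ?_,
    fun θ => ⟨hmem _ _, hmax _ _, hface _ _⟩⟩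
  simp only [add_right_comm θ (2 * π), periodic_dirCoord b _]

lemma dirCoord_perp_le_dirCoord_perp {γ : ℝ} {p q : E} (hαβ : α < β) (hβα : β < α + π)
    (hγ : γ ∈ Icc (β - π / 2) (α + π / 2)) (hα : dirCoord b α q ≤ dirCoord b α p)
    (hβ : dirCoord b β p ≤ dirCoord b β q) :
    dirCoord b (γ + π / 2) p ≤ dirCoord b (γ + π / 2) q := by
  have hcosα : 0 ≤ Real.cos (α - γ) :=
    Real.cos_nonneg_of_mem_Icc ⟨by linarith [hγ.2], by linarith [hγ.1]⟩
  have hcosβ : 0 ≤ Real.cos (β - γ) :=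
    Real.cos_nonneg_of_mem_Icc ⟨by linarith [hγ.2], by linarith [hγ.1]⟩
  have hsin : 0 < Real.sin (β - α) :=
    Real.sin_pos_of_pos_of_lt_pi (by linarith) (by linarith)
  have hperp (x : E) : Real.sin (β - α) * dirCoord b (γ + π / 2) x =
      Real.cos (α - γ) * dirCoord b β x - Real.cos (β - γ) * dirCoord b α x := by
    rw [dirCoord_eq_cos_mul_add_sin_mul b γ β, dirCoord_eq_cos_mul_add_sin_mul b γ α,
      ← sub_sub_sub_cancel_right β α γ, Real.sin_sub (β - γ)]
    ring
  refine le_of_mul_le_mul_left ?_ hsin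
  rw [hperp, hperp]
  gcongr

lemma dirCoord_perp_mem_Icc_of_mem_supportArc {a a' p : E} (hβ : β < α + π / 2)
    (ha : IsFaceEnd b C α a) (ha' : IsFaceEnd b C β a') (hp : p ∈ supportArc b C α β) :
    dirCoord b (α + π / 2) p ∈
      Icc (dirCoord b (α + π / 2) a) (dirCoord b (α + π / 2) a') := by
  obtain ⟨hpC, φ, ⟨hαφ, hφβ⟩, hpmax⟩ := hp
  constructor
  · exact dirCoord_perp_le_dirCoord_perp hαφ (by linarith) ⟨by linarith, by linarith⟩
      (ha.isMaxOn hpC) (hpmax ha.mem)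
  rcases hφβ.lt_or_eq with hlt | rfl
  · exact dirCoord_perp_le_dirCoord_perp hlt (by linarith) ⟨by linarith, by linarith⟩
      (hpmax ha'.mem) (ha'.isMaxOn hpC)
  · have heq : dirCoord b φ p = dirCoord b φ a' :=
      le_antisymm (ha'.isMaxOn hpC) (hpmax ha'.mem)
    have hperp : dirCoord b (φ + π / 2) p ≤ dirCoord b (φ + π / 2) a' :=
      ha'.isMaxOn_face ⟨hpC, heq⟩
    have hcoeff : 0 ≤ Real.sin (α + π / 2 - φ) :=
      Real.sin_nonneg_of_nonneg_of_le_pi (by linarith) (by linarith)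
    simp only [dirCoord_eq_cos_mul_add_sin_mul b φ (α + π / 2), heq]
    gcongr

lemma dist_le_inv_cos_mul_of_mem_supportArc {p q : E} (hβ : β ≤ α + δ) (hδ : δ < π / 2)
    (hp : p ∈ supportArc b C α β) (hq : q ∈ supportArc b C α β) :
    dist p q ≤ (Real.cos δ)⁻¹ *
      dist (dirCoord b (α + π / 2) p) (dirCoord b (α + π / 2) q) := by
  obtain ⟨hpC, φ, hφ, hpmax⟩ := hp
  obtain ⟨hqC, χ, hχ, hqmax⟩ := hq
  have hpos : 0 ≤ dirCoord b φ (p - q) := by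
    rw [map_sub]
    exact sub_nonneg.mpr (hpmax hqC)
  have hneg : dirCoord b χ (p - q) ≤ 0 := by
    rw [map_sub]
    exact sub_nonpos.mpr (hqmax hpC)
  obtain ⟨ω, hω, hzero⟩ := intermediate_value_uIcc
    (continuous_dirCoord_apply b (p - q)).continuousOn (Icc_subset_uIcc ⟨hneg, hpos⟩)
  have hωmem : ω ∈ Icc α (α + δ) :=
    Icc_subset_Icc_right hβ
      (uIcc_subset_Icc (Ioc_subset_Icc_self hχ) (Ioc_subset_Icc_self hφ) hω)
  have hcos : 0 < Real.cos δ :=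
    Real.cos_pos_of_mem_Ioo ⟨by linarith [hωmem.1, hωmem.2, Real.pi_pos], hδ⟩
  rw [le_inv_mul_iff₀' hcos, dist_eq_norm, Real.dist_eq, ← map_sub]
  exact norm_mul_cos_le_abs_dirCoord b hωmem (by linarith [Real.pi_pos]) hzero

variable [MeasurableSpace E] [BorelSpace E]

lemma hausdorffMeasure_supportArc_le {a a' : E} (hαβ : α < β) (hβ : β ≤ α + δ) (hδ : δ < π / 2)
    (ha : IsFaceEnd b C α a) (ha' : IsFaceEnd b C β a') :
    μH[1] (supportArc b C α β) ≤ ENNReal.ofReal ((Real.cos δ)⁻¹ *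
      (dirCoord b (α + π / 2) a' - dirCoord b (α + π / 2) a)) := by
  have hcos : 0 ≤ Real.cos δ :=
    Real.cos_nonneg_of_mem_Icc ⟨by linarith [Real.pi_pos], hδ.le⟩
  exact hausdorffMeasure_one_le_of_dist_le_mul_dist (inv_nonneg.mpr hcos)
    (fun p hp q hq => dist_le_inv_cos_mul_of_mem_supportArc hβ hδ hp hq)
    fun p hp => dirCoord_perp_mem_Icc_of_mem_supportArc (by linarith) ha ha' hp

end Arcs

section Perimeter

variable {E : Type*} [NormedAddCommGroup E] [InnerProductSpace ℝ E]
  {b : OrthonormalBasis (Fin 2) ℝ E} {C : Set E}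

lemma dirCoord_sub_dirCoord_apply_sub_le_mul_diam (hC : Bornology.IsBounded C) {α β : ℝ}
    (hαβ : α ≤ β) {x y : E} (hx : x ∈ C) (hy : y ∈ C) :
    (dirCoord b α - dirCoord b β) (x - y) ≤ (β - α) * diam C :=
  calc (dirCoord b α - dirCoord b β) (x - y) ≤ |α - β| * ‖x - y‖ :=
        (le_abs_self _).trans (abs_dirCoord_sub_dirCoord_le b α β (x - y))
    _ = (β - α) * dist x y := by
        rw [abs_sub_comm, abs_of_nonneg (sub_nonneg.mpr hαβ), dist_eq_norm]
    _ ≤ (β - α) * diam C :=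
        mul_le_mul_of_nonneg_left (dist_le_diam_of_mem hC hx hy) (sub_nonneg.mpr hαβ)

lemma sum_dirCoord_perp_sub_le_pi_mul_diam (hC : Bornology.IsBounded C) {n : ℕ} {θ : ℕ → ℝ}
    (hθmono : Monotone θ) (hθ : ∀ k, θ (n + k) = θ k + π) {a : ℕ → E} (ha : ∀ k, a k ∈ C)
    (hclosed : a (n + n) = a 0) :
    ∑ k ∈ Finset.range (n + n),
        (dirCoord b (θ k + π / 2) (a (k + 1)) - dirCoord b (θ k + π / 2) (a k)) ≤
      π * diam C := by
  set turn : ℕ → StrongDual ℝ E := fun k =>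
    dirCoord b (θ k + π / 2) - dirCoord b (θ (k + 1) + π / 2) with hturn
  have hanti (k : ℕ) : turn (n + k) = -turn k := by
    simp only [hturn, add_assoc n k 1, hθ, add_right_comm _ π, dirCoord_add_pi]
    abel
  have hpair (k : ℕ) : turn k (a (k + 1)) + turn (n + k) (a (n + k + 1)) ≤
      (θ (k + 1) - θ k) * diam C := by
    rw [hanti, neg_apply, ← sub_eq_add_neg, ← map_sub, ← add_sub_add_right_eq_sub _ _ (π / 2)]
    exact dirCoord_sub_dirCoord_apply_sub_le_mul_diam hC
      (add_le_add_left (hθmono k.le_succ) _) (ha _) (ha _)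
  have hbyparts (k : ℕ) :
      dirCoord b (θ k + π / 2) (a (k + 1)) - dirCoord b (θ k + π / 2) (a k) =
        turn k (a (k + 1)) +
          (dirCoord b (θ (k + 1) + π / 2) (a (k + 1)) - dirCoord b (θ k + π / 2) (a k)) := by
    simp only [hturn, sub_apply]
    ring
  have hperiod : dirCoord b (θ (n + n) + π / 2) (a (n + n)) = dirCoord b (θ 0 + π / 2) (a 0) := by
    have hfull : θ (n + n) + π / 2 = θ 0 + π / 2 + 2 * π := by
      rw [hθ, ← add_zero n, hθ]
      ring
    rw [hfull, periodic_dirCoord, hclosed]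
  calc _ = ∑ k ∈ Finset.range (n + n), turn k (a (k + 1)) := by
        rw [Finset.sum_congr rfl fun k _ => hbyparts k, Finset.sum_add_distrib,
          Finset.sum_range_sub (fun k => dirCoord b (θ k + π / 2) (a k)), hperiod, sub_self,
          add_zero]
    _ = ∑ k ∈ Finset.range n, (turn k (a (k + 1)) + turn (n + k) (a (n + k + 1))) := by
        rw [Finset.sum_range_add, Finset.sum_add_distrib]
    _ ≤ ∑ k ∈ Finset.range n, (θ (k + 1) - θ k) * diam C := Finset.sum_le_sum fun k _ => hpair k
    _ = π * diam C := by
        rw [← Finset.sum_mul, Finset.sum_range_sub, ← add_zero n, hθ, add_sub_cancel_left]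

lemma supportPoints_subset_biUnion_supportArc (b : OrthonormalBasis (Fin 2) ℝ E) (C : Set E)
    {m : ℕ} {θ : ℕ → ℝ} (hθ : Monotone θ) (hfirst : θ 0 = -π) (hlast : θ m = π) :
    supportPoints C ⊆ ⋃ k ∈ Finset.range m, supportArc b C (θ k) (θ (k + 1)) := by
  intro p hp
  obtain ⟨φ, hφ, hmax⟩ := exists_isMaxOn_dirCoord_of_mem_supportPoints b hp
  rw [← hfirst, ← hlast, ← hθ.biUnion_Ico_Ioc_map_succ] at hφ
  simp only [mem_iUnion, Finset.mem_range] at hφ ⊢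
  obtain ⟨k, hk, hφk⟩ := hφ
  exact ⟨k, hk.2, hp.1, φ, hφk, hmax⟩

variable [MeasurableSpace E] [BorelSpace E]

lemma hausdorffMeasure_supportPoints_le_of_partition (b : OrthonormalBasis (Fin 2) ℝ E)
    (hC : IsCompact C) {n : ℕ} {θ : ℕ → ℝ} {δ : ℝ} (hθmono : StrictMono θ)
    (hmesh : ∀ k, θ (k + 1) ≤ θ k + δ) (hδ : δ < π / 2) (hstart : θ 0 = -π)
    (hθ : ∀ k, θ (n + k) = θ k + π) :
    μH[1] (supportPoints C) ≤ ENNReal.ofReal ((Real.cos δ)⁻¹ * (π * diam C)) := by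
  rcases C.eq_empty_or_nonempty with rfl | hne
  · simp [supportPoints]
  obtain ⟨a, hper, ha⟩ := exists_periodic_isFaceEnd b hC hne
  let gap : ℕ → ℝ := fun k =>
    dirCoord b (θ k + π / 2) (a (θ (k + 1))) - dirCoord b (θ k + π / 2) (a (θ k))
  have hmid : θ n = 0 := by simpa [hstart] using hθ 0
  have hend : θ (n + n) = π := by rw [hθ, hmid, zero_add]
  have hclosed : a (θ (n + n)) = a (θ 0) := by
    rw [hend, hstart, ← hper (-π), two_mul, neg_add_cancel_left]
  have hcos : 0 ≤ (Real.cos δ)⁻¹ := inv_nonneg.mpr <| Real.cos_nonneg_of_mem_Icc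
    ⟨by linarith [hmesh 0, hθmono (Nat.lt_succ_self 0), Real.pi_pos], hδ.le⟩
  have hgap_nonneg (k : ℕ) : 0 ≤ gap k := by
    have hlt : θ k < θ (k + 1) := hθmono k.lt_succ_self
    exact sub_nonneg.mpr <| dirCoord_perp_le_dirCoord_perp hlt (by linarith [hmesh k])
      ⟨by linarith [hmesh k], by linarith [Real.pi_pos]⟩ ((ha _).isMaxOn (ha _).mem)
      ((ha _).isMaxOn (ha _).mem)
  calc μH[1] (supportPoints C)
      ≤ ∑ k ∈ Finset.range (n + n), μH[1] (supportArc b C (θ k) (θ (k + 1))) :=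
        (measure_mono (supportPoints_subset_biUnion_supportArc b C hθmono.monotone hstart
          hend)).trans (measure_biUnion_finset_le _ _)
    _ ≤ ∑ k ∈ Finset.range (n + n), ENNReal.ofReal ((Real.cos δ)⁻¹ * gap k) :=
        Finset.sum_le_sum fun k _ => hausdorffMeasure_supportArc_le (hθmono k.lt_succ_self)
          (hmesh k) hδ (ha _) (ha _)
    _ = ENNReal.ofReal ((Real.cos δ)⁻¹ * ∑ k ∈ Finset.range (n + n), gap k) := by
        rw [Finset.mul_sum,
          ENNReal.ofReal_sum_of_nonneg fun k _ => mul_nonneg hcos (hgap_nonneg k)]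
    _ ≤ ENNReal.ofReal ((Real.cos δ)⁻¹ * (π * diam C)) := by
        gcongr
        exact sum_dirCoord_perp_sub_le_pi_mul_diam hC.isBounded hθmono.monotone hθ
          (fun k => (ha (θ k)).mem) hclosed

lemma hausdorffMeasure_supportPoints_le_inv_cos_mul (b : OrthonormalBasis (Fin 2) ℝ E)
    (hC : IsCompact C) {n : ℕ} (hn : 2 < n) :
    μH[1] (supportPoints C) ≤ ENNReal.ofReal ((Real.cos (π / n))⁻¹ * (π * diam C)) := by
  have hlt : π / n < π / 2 := div_lt_div_of_pos_left Real.pi_pos two_pos (by exact_mod_cast hn)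
  refine hausdorffMeasure_supportPoints_le_of_partition b hC
    (n := n) (θ := fun k => -π + k * (π / n)) ?_ (fun k => ?_) hlt (by simp) fun k => ?_
  · intro j k hjk
    dsimp only
    gcongr
  · push_cast
    linarith
  · push_cast
    field_simp
    ring

lemma hausdorffMeasure_supportPoints_le (hE : finrank ℝ E = 2) (hC : IsCompact C) :
    μH[1] (supportPoints C) ≤ ENNReal.ofReal (π * diam C) := by
  have := Module.finite_of_finrank_pos (hE.symm ▸ two_pos)
  let b : OrthonormalBasis (Fin 2) ℝ E := (stdOrthonormalBasis ℝ E).reindex (finCongr hE)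
  have hcos : Tendsto (fun n : ℕ => (Real.cos (π / n))⁻¹) atTop (𝓝 1) := by
    simpa using ((Real.continuous_cos.tendsto 0).comp
      (tendsto_const_div_atTop_nhds_zero_nat π)).inv₀ (by simp)
  have hlim : Tendsto (fun n : ℕ => ENNReal.ofReal ((Real.cos (π / n))⁻¹ * (π * diam C))) atTop
      (𝓝 (ENNReal.ofReal (π * diam C))) := by
    simpa using ENNReal.tendsto_ofReal (hcos.mul_const (π * diam C))
  refine ge_of_tendsto hlim ?_
  filter_upwards [eventually_gt_atTop 2] with n hn
  exact hausdorffMeasure_supportPoints_le_inv_cos_mul b hC hn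

end Perimeter

theorem perimeter_le_pi_mul_diam_general {E : Type*} [NormedAddCommGroup E]
    [InnerProductSpace ℝ E] [MeasurableSpace E] [BorelSpace E] (hE : finrank ℝ E = 2)
    {K : Set E} (hKb : Bornology.IsBounded K) (hKconv : Convex ℝ K) :
    μH[1] (frontier K) ≤ ENNReal.ofReal (π * diam K) := by
  have : FiniteDimensional ℝ E := Module.finite_of_finrank_pos (hE.symm ▸ two_pos)
  have : ProperSpace E := FiniteDimensional.proper ℝ E
  calc μH[1] (frontier K) ≤ μH[1] (supportPoints (closure K)) :=
        measure_mono (frontier_subset_supportPoints_closure hKconv)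
    _ ≤ ENNReal.ofReal (π * diam (closure K)) :=
        hausdorffMeasure_supportPoints_le hE hKb.isCompact_closure
    _ = ENNReal.ofReal (π * diam K) := by rw [diam_closure]

/-- Diameter–perimeter inequality for planar convex bodies: the perimeter of a
compact convex body `K ⊆ ℝ²` with nonempty interior is at most `π · diam K`. -/
theorem perimeter_le_pi_mul_diam
    (K : Set (EuclideanSpace ℝ (Fin 2))) (hK : K.Nonempty)
    (hKc : IsCompact K) (hKconv : Convex ℝ K)
    (hKint : (interior K).Nonempty) :
    μH[1] (frontier K) ≤ ENNReal.ofReal (Real.pi * diam K) := by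
  exact perimeter_le_pi_mul_diam_general finrank_euclideanSpace_fin hKc.isBounded hKconv
end

section
/- Monotonicity of perimeter under inclusion for planar convex bodies: if K and L are compact convex subsets of ℝ², each with nonempty interior, and K ⊆ L, then the perimeter of K is at most the perimeter of L: ℋ¹(∂K) ≤ ℋ¹(∂L). -/
open MeasureTheory

/-!
The nearest-point projection `P` onto a nonempty closed convex set `K` is `1`-Lipschitz, and it is
constant along each ray that leaves `K` from `P y` through a point `y ∉ K`. If `L ⊇ K` is bounded,
such a ray crosses `frontier L`, so `P y ∈ P '' frontier L`. A point of `frontier K` is a limit of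
points `y ∉ K`, hence of their projections, and `P '' frontier L` is compact; thus
`frontier K ⊆ P '' frontier L`. A `1`-Lipschitz map does not increase Hausdorff measure.
-/

open Set Bornology
open scoped NNReal RealInnerProductSpace

section Frontier

theorem exists_mem_frontier_of_continuous {X Y : Type*} [TopologicalSpace X] [PreconnectedSpace X]
    [TopologicalSpace Y] {f : X → Y} (hf : Continuous f) {s : Set Y} {a b : X} (ha : f a ∈ s)
    (hb : f b ∉ s) : ∃ c, f c ∈ frontier s := by
  have hne : (frontier (f ⁻¹' s)).Nonempty :=
    nonempty_frontier_iff.2 ⟨⟨a, ha⟩, (ne_univ_iff_exists_notMem _).2 ⟨b, hb⟩⟩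
  exact hne.mono (hf.frontier_preimage_subset s)

variable {E : Type*} [NormedAddCommGroup E] [NormedSpace ℝ E] {s : Set E}

theorem exists_add_smul_mem_frontier_s8 (hs : IsBounded s) {x v : E} (hx : x ∈ s) (hv : v ≠ 0) :
    ∃ t : ℝ≥0, x + t • v ∈ frontier s := by
  obtain ⟨r, hr, hsr⟩ := hs.subset_ball_lt 0 x
  have hnorm : ‖(r.toNNReal / ‖v‖₊) • v‖ = r := by
    rw [NNReal.smul_def, norm_smul, NNReal.norm_eq, NNReal.coe_div, Real.coe_toNNReal r hr.le,
      coe_nnnorm, div_mul_cancel₀ _ (norm_ne_zero_iff.2 hv)]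
  have hout : x + (r.toNNReal / ‖v‖₊) • v ∉ s := fun hmem ↦ by
    have hlt := hsr hmem
    rw [mem_ball_iff_norm, add_sub_cancel_left, hnorm] at hlt
    exact hlt.false
  exact exists_mem_frontier_of_continuous (f := fun t : ℝ≥0 ↦ x + t • v) (a := 0) (by fun_prop)
    (by simpa using hx) hout

variable [FiniteDimensional ℝ E]

theorem interior_closure_eq_interior_of_convex (hs : Convex ℝ s) :
    interior (closure s) = interior s := by
  rcases (interior s).eq_empty_or_nonempty with hempty | hne
  · have hspan : affineSpan ℝ s ≠ ⊤ := fun htop ↦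
      (hs.interior_nonempty_iff_affineSpan_eq_top.2 htop).ne_empty hempty
    have hclosure : closure s ⊆ affineSpan ℝ s :=
      closure_minimal (subset_affineSpan ℝ s) (AffineSubspace.closed_of_finiteDimensional _)
    rw [hempty, ← not_nonempty_iff_eq_empty, hs.closure.interior_nonempty_iff_affineSpan_eq_top]
    exact fun htop ↦ hspan (top_le_iff.1 (htop ▸ affineSpan_le.2 hclosure))
  · exact hs.interior_closure_eq_interior_of_nonempty_interior hne

theorem frontier_closure_eq_frontier_of_convex (hs : Convex ℝ s) :
    frontier (closure s) = frontier s := by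
  rw [frontier, frontier, closure_closure, interior_closure_eq_interior_of_convex hs]

end Frontier

variable {E : Type*} [NormedAddCommGroup E] [InnerProductSpace ℝ E] {K L : Set E}

/-- `p` is the metric projection of `y` onto `K`, encoded by the obtuse-angle criterion: for convex
`K` it is equivalent to `p` being the point of `K` nearest to `y`. -/
def IsMetricProj (K : Set E) (y p : E) : Prop :=
  p ∈ K ∧ ∀ w ∈ K, ⟪y - p, w - p⟫ ≤ 0

theorem exists_isMetricProj (hne : K.Nonempty) (hcomplete : IsComplete K) (hconv : Convex ℝ K)
    (y : E) : ∃ p, IsMetricProj K y p := by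
  obtain ⟨p, hp, hmin⟩ := exists_norm_eq_iInf_of_complete_convex hne hcomplete hconv y
  exact ⟨p, hp, (norm_eq_iInf_iff_real_inner_le_zero hconv hp).1 hmin⟩

namespace IsMetricProj

variable {y z p q : E}

theorem of_mem (hy : y ∈ K) : IsMetricProj K y y :=
  ⟨hy, fun w _ ↦ by simp⟩

theorem dist_le (hy : IsMetricProj K y p) (hz : IsMetricProj K z q) : dist p q ≤ dist y z := by
  rw [dist_eq_norm, dist_eq_norm]
  have hinner : ‖p - q‖ * ‖p - q‖ ≤ ⟪y - z, p - q⟫ := by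
    have hyq := hy.2 q hz.1
    have hzp := hz.2 p hy.1
    rw [← real_inner_self_eq_norm_mul_norm]
    simp only [inner_sub_left, inner_sub_right] at hyq hzp ⊢
    linarith
  rcases (norm_nonneg (p - q)).eq_or_lt with hzero | hpos
  · exact hzero ▸ norm_nonneg _
  · exact le_of_mul_le_mul_right (hinner.trans (real_inner_le_norm _ _)) hpos

theorem unique (hp : IsMetricProj K y p) (hq : IsMetricProj K y q) : p = q :=
  dist_le_zero.1 ((hp.dist_le hq).trans_eq (dist_self y))

theorem add_smul_sub (h : IsMetricProj K y p) (t : ℝ≥0) :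
    IsMetricProj K (p + t • (y - p)) p := by
  refine ⟨h.1, fun w hw ↦ ?_⟩
  rw [add_sub_cancel_left, NNReal.smul_def, real_inner_smul_left]
  exact mul_nonpos_of_nonneg_of_nonpos t.2 (h.2 w hw)

theorem exists_mem_frontier (h : IsMetricProj K y p) (hy : y ∉ K) (hL : IsBounded L)
    (hKL : K ⊆ L) : ∃ z ∈ frontier L, IsMetricProj K z p := by
  have hyp : y - p ≠ 0 := sub_ne_zero.2 fun heq ↦ hy (heq ▸ h.1)
  obtain ⟨t, ht⟩ := exists_add_smul_mem_frontier_s8 hL (hKL h.1) hyp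
  exact ⟨_, ht, h.add_smul_sub t⟩

variable {P : E → E}

theorem lipschitzWith_one (hP : ∀ y, IsMetricProj K y (P y)) : LipschitzWith 1 P :=
  LipschitzWith.mk_one fun y z ↦ (hP y).dist_le (hP z)

theorem frontier_subset_closure_image (hP : ∀ y, IsMetricProj K y (P y)) (hK : IsClosed K)
    (hL : IsBounded L) (hKL : K ⊆ L) : frontier K ⊆ closure (P '' frontier L) := by
  intro x hx
  have hproj_compl : P '' Kᶜ ⊆ P '' frontier L := by
    rintro _ ⟨y, hy, rfl⟩
    obtain ⟨z, hz, hzp⟩ := (hP y).exists_mem_frontier hy hL hKL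
    exact ⟨z, hz, (hP z).unique hzp⟩
  have hPx : P x = x := (hP x).unique (of_mem (hK.frontier_subset hx))
  have hx_compl : x ∈ closure Kᶜ := (frontier_eq_closure_inter_closure.subset hx).2
  rw [← hPx]
  exact closure_mono hproj_compl
    (image_closure_subset_closure_image (lipschitzWith_one hP).continuous ⟨x, hx_compl, rfl⟩)

end IsMetricProj

variable [FiniteDimensional ℝ E]

theorem exists_lipschitzWith_one_frontier_subset_image (hK : IsClosed K) (hKconv : Convex ℝ K)
    (hL : IsBounded L) (hKL : K ⊆ L) :
    ∃ P : E → E, LipschitzWith 1 P ∧ frontier K ⊆ P '' frontier L := by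
  rcases K.eq_empty_or_nonempty with rfl | hne
  · exact ⟨id, LipschitzWith.id, by simp⟩
  choose P hP using exists_isMetricProj hne hK.isComplete hKconv
  have hlip : LipschitzWith 1 P := IsMetricProj.lipschitzWith_one hP
  have hcompact : IsCompact (P '' frontier L) :=
    (hL.isCompact_closure.of_isClosed_subset isClosed_frontier frontier_subset_closure).image
      hlip.continuous
  have hsub := IsMetricProj.frontier_subset_closure_image hP hK hL hKL
  exact ⟨P, hlip, hcompact.isClosed.closure_eq ▸ hsub⟩

theorem perimeter_mono_of_subset_general [MeasurableSpace E] [BorelSpace E] (hK : Convex ℝ K)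
    (hL : IsBounded L) (hKL : K ⊆ L) {d : ℝ} (hd : 0 ≤ d) :
    μH[d] (frontier K) ≤ μH[d] (frontier L) := by
  obtain ⟨P, hlip, hsub⟩ := exists_lipschitzWith_one_frontier_subset_image isClosed_closure
    hK.closure hL.closure (closure_mono hKL)
  calc
    μH[d] (frontier K) = μH[d] (frontier (closure K)) := by
      rw [frontier_closure_eq_frontier_of_convex hK]
    _ ≤ μH[d] (P '' frontier (closure L)) := measure_mono hsub
    _ ≤ μH[d] (frontier (closure L)) := by simpa using hlip.hausdorffMeasure_image_le hd _
    _ ≤ μH[d] (frontier L) := measure_mono frontier_closure_subset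

/-- Monotonicity of perimeter under inclusion for planar convex bodies. -/
theorem perimeter_mono_of_subset
    (K L : Set (EuclideanSpace ℝ (Fin 2)))
    (hKc : IsCompact K) (hKconv : Convex ℝ K) (hKint : (interior K).Nonempty)
    (hLc : IsCompact L) (hLconv : Convex ℝ L) (hLint : (interior L).Nonempty)
    (hKL : K ⊆ L) :
    μH[1] (frontier K) ≤ μH[1] (frontier L) :=
  perimeter_mono_of_subset_general hKconv hLc.isBounded hKL zero_le_one
end
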